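/- arXiv:2106.02942 — 3 statements merged into one kernel-verified Lean document; each statement's English description precedes it below -/
import Mathlib

section
/- There is an absolute constant c ≥ 1 such that for every finite simple graph G with n ≥ 2 vertices and m ≥ 1 edges, the number of permutations π ∈ Π with parallel round complexity ρ(G, π) > c · log n is at most m!/n²; equivalently, for a uniformly random π ∈ Π, with probability at least 1 − n⁻² one has ρ(G, π) ≤ c · log n. -/
/-!
Process the edges sequentially in the order of `π`: an edge with two unmatched (alive) endpoints is
matched and its endpoints die. Give every vertex weight `1` initially; a match replaces both weights
by `9/8` times their sum, and processing an edge between a dead and an alive vertex adds the weight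
of the dead end to the alive one. By induction along the process (`Inv.step`), a vertex that dies
with weight `w` is matched by the parallel algorithm within `log w / log (9/8)` rounds, since the
longest chain of dependencies leading to it contributes a factor `9/8` per match. Hence a run with
`ρ` rounds ends with a dead vertex of weight at least `(9/8) ^ (ρ - 1)` (`Inv.rho_le`).

It remains to bound the expected final weight. Let `d` be the degree in the graph induced on the
alive vertices. The potential counts

* a unit of weight at an alive `u` as `∑ √(d v)` over alive neighbours `v`, plus `(1/2) d(u)^(3/2)`;
* a unit of weight at a dead `v` as `1/8 + ∑ √(d x)` over unprocessed edges `vx` with `x` alive.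

Conditionally on the past, the next edge is uniform among the unprocessed ones, and the potential is
a supermartingale (`pot_drift`). The potential is linear in the weights, so this is checked per unit
of weight. For a dead-alive edge (`edge_drift`) and for an alive vertex (`alive_drift`) the gain is
outweighed by the loss from vertices dying: `x` loses a neighbour `y` at rate about `d y`, so
`√(d x)` drifts down at rate about `∑ d(y) / (2 √(d x))`, and the arithmetic-geometric mean
inequality `c √b ≤ b / (2 √a) + c² √a / 2` compares the two.

The initial potential is at most `2 n³` and the final one at least `(1/8) (9/8) ^ (ρ - 1)`, which is
at least `2 n⁵` when `ρ > 90 log n`. Markov's inequality gives the bound `m! / n²`.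
-/

namespace RGMM

noncomputable section

variable {V : Type} [Fintype V] [DecidableEq V]

/-- Two edges (as unordered pairs) share an endpoint. -/
def Share (e f : Sym2 V) : Prop := ∃ x, x ∈ e ∧ x ∈ f

/-- `inGMM G π e` holds iff the edge `e` belongs to the greedy maximal matching
`GMM(G, π)` of `G` obtained by processing the edges in increasing order of the rank
function `π` and adding each edge whose endpoints are both unmatched so far. -/
def inGMM (G : SimpleGraph V) (π : Sym2 V → ℕ) (e : Sym2 V) : Prop :=
  e ∈ G.edgeSet ∧ ∀ f, f ∈ G.edgeSet → Share e f → π f < π e → ¬ inGMM G π f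
termination_by π e
decreasing_by assumption

/-- The set `Π` of permutations of the edges of `G`: bijections from the edge set to
`{0, …, m-1}`, equivalently `{1, …, m}` after the shift performed in `rank`. -/
abbrev EdgePerm (G : SimpleGraph V) [DecidableRel G.Adj] : Type :=
  {e // e ∈ G.edgeFinset} ≃ Fin G.edgeFinset.card

/-- The rank (in `{1, …, m}`) of an edge under a permutation; non-edges get rank `0`. -/
def rank (G : SimpleGraph V) [DecidableRel G.Adj] (σ : EdgePerm G) (e : Sym2 V) : ℕ :=
  if h : e ∈ G.edgeFinset then (σ ⟨e, h⟩ : ℕ) + 1 else 0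

/-- `e` is a local-minimum edge of `G` restricted to the vertex set `S`: its rank is
smaller than the rank of every other edge adjacent to it inside `S`. -/
def localMin (G : SimpleGraph V) (π : Sym2 V → ℕ) (S : Set V) (e : Sym2 V) : Prop :=
  e ∈ G.edgeSet ∧ (∀ x ∈ e, x ∈ S) ∧
    ∀ f, f ∈ G.edgeSet → (∀ x ∈ f, x ∈ S) → Share e f → f ≠ e → π e < π f

/-- One round of the parallel greedy matching algorithm: all local-minimum edges join the
matching and their endpoints are deleted. -/
def stepRGMM (G : SimpleGraph V) (π : Sym2 V → ℕ) (S : Set V) : Set V :=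
  S \ {x | ∃ e, localMin G π S e ∧ x ∈ e}

/-- The set of vertices remaining after `t` parallel rounds. -/
def residual (G : SimpleGraph V) (π : Sym2 V → ℕ) : ℕ → Set V
  | 0 => Set.univ
  | t + 1 => stepRGMM G π (residual G π t)

/-- The graph induced on `S` still has an edge. -/
def hasEdgeIn (G : SimpleGraph V) (S : Set V) : Prop :=
  ∃ e ∈ G.edgeSet, ∀ x ∈ e, x ∈ S

/-- `ρ(G, π)`: the parallel round complexity, i.e. the number of rounds of the parallel
greedy matching algorithm until the remaining graph has no edges. -/
def rho (G : SimpleGraph V) (π : Sym2 V → ℕ) : ℕ :=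
  sInf {t | ¬ hasEdgeIn G (residual G π t)}

set_option linter.unusedSectionVars false

/-! ### Residual degrees and the value functions -/

/-- The vertices of the alive set `A` joined to `x` by an edge of `R`, the edges not yet
processed. The vertex `x` itself may be alive or dead. -/
def nb (A : Finset V) (R : Finset (Sym2 V)) (x : V) : Finset V := A.filter (fun y => s(x, y) ∈ R)

/-- The square root of the residual degree: the value of an unprocessed edge from a dead vertex
to the alive vertex `x`, per unit of weight at the dead end. -/
def sq (A : Finset V) (R : Finset (Sym2 V)) (x : V) : ℝ := √((nb A R x).card : ℝ)

/-- The value of a unit of weight at an alive vertex `x`: the sum of `√(deg v)` over its alive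
neighbours `v`, plus `(1/2) (deg x)^(3/2)`. -/
def gv (A : Finset V) (R : Finset (Sym2 V)) (x : V) : ℝ :=
  ∑ v ∈ nb A R x, sq A R v + 1 / 2 * ((nb A R x).card : ℝ) * sq A R x

/-- The value of a unit of weight at a dead vertex `x`: the value of its unprocessed edges to
alive vertices, plus a constant `1/8` by which the weight is still counted at the end. -/
def hv (A : Finset V) (R : Finset (Sym2 V)) (x : V) : ℝ :=
  1 / 8 + ∑ v ∈ nb A R x, sq A R v

/-- Both endpoints of `e` lie in `A`. -/
def Inside (A : Finset V) (e : Sym2 V) : Prop := ∀ x, x ∈ e → x ∈ A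

instance (A : Finset V) (e : Sym2 V) : Decidable (Inside A e) := by
  unfold Inside; infer_instance

/-- The vertices of `A` that are not endpoints of `e`. -/
def rm (A : Finset V) (e : Sym2 V) : Finset V := A.filter (fun x => x ∉ e)

lemma mem_nb {A : Finset V} {R : Finset (Sym2 V)} {x y : V} :
    y ∈ nb A R x ↔ y ∈ A ∧ s(x, y) ∈ R := by simp [nb]

lemma mem_nb_comm {A : Finset V} {R : Finset (Sym2 V)} {x y : V} (hx : x ∈ A) (h : y ∈ nb A R x) :
    x ∈ nb A R y := by
  rw [mem_nb] at *; rw [Sym2.eq_swap]; exact ⟨hx, h.2⟩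

lemma nb_ne {A : Finset V} {R : Finset (Sym2 V)} (hR : ∀ e ∈ R, ¬ e.IsDiag)
    {x y : V} (h : y ∈ nb A R x) : y ≠ x := by
  rw [mem_nb] at h
  rintro rfl
  exact hR _ h.2 (by simp)

lemma nb_rm {A : Finset V} {R : Finset (Sym2 V)} {x : V} {e : Sym2 V} :
    nb (rm A e) (R.erase e) x = (nb A R x).filter (fun y => y ∉ e) := by
  ext y
  simp only [mem_nb, rm, Finset.mem_filter, Finset.mem_erase]
  constructor
  · tauto
  · rintro ⟨⟨h1, h2⟩, h3⟩
    refine ⟨⟨h1, h3⟩, ?_, h2⟩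
    rintro rfl
    simp at h3

lemma nb_erase {A : Finset V} {R : Finset (Sym2 V)} {x : V} {e : Sym2 V} (hx : x ∈ A)
    (he : ¬ Inside A e) : nb A (R.erase e) x = nb A R x := by
  ext y
  simp only [mem_nb, Finset.mem_erase]
  constructor
  · tauto
  · rintro ⟨h1, h2⟩
    refine ⟨h1, ?_, h2⟩
    rintro rfl
    apply he
    intro z hz
    rcases Sym2.mem_iff.1 hz with rfl | rfl <;> assumption

lemma sq_nonneg' (A : Finset V) (R : Finset (Sym2 V)) (x : V) : 0 ≤ sq A R x := Real.sqrt_nonneg _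

lemma gv_nonneg (A : Finset V) (R : Finset (Sym2 V)) (x : V) : 0 ≤ gv A R x := by
  have h1 := Finset.sum_nonneg (s := nb A R x) (fun v _ => sq_nonneg' A R v)
  exact add_nonneg h1 (mul_nonneg (by positivity) (sq_nonneg' A R x))

lemma hv_nonneg (A : Finset V) (R : Finset (Sym2 V)) (x : V) : 1 / 8 ≤ hv A R x := by
  unfold hv
  have := Finset.sum_nonneg (s := nb A R x) (fun v _ => sq_nonneg' A R v)
  linarith

lemma sq_rm_le (A : Finset V) (R : Finset (Sym2 V)) (x : V) (e : Sym2 V) :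
    sq (rm A e) (R.erase e) x ≤ sq A R x := by
  unfold sq
  rw [nb_rm]
  apply Real.sqrt_le_sqrt
  exact_mod_cast Finset.card_le_card (Finset.filter_subset _ _)

/-- A sum over the edges of `R` joining `w` to another vertex `y` of `A` is a sum over the
neighbours `y` of `w`. -/
lemma sum_inc {A : Finset V} {R : Finset (Sym2 V)} (hR : ∀ e ∈ R, ¬ e.IsDiag) (w : V)
    (F : V → Sym2 V → ℝ) :
    ∑ e ∈ R, ∑ y ∈ A, (if w ∈ e ∧ y ∈ e ∧ y ≠ w then F y e else 0)
      = ∑ y ∈ nb A R w, F y s(w, y) := by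
  rw [Finset.sum_comm, nb, Finset.sum_filter]
  apply Finset.sum_congr rfl
  intro y hy
  by_cases hyw : y = w
  · subst hyw
    simp only [ne_eq, not_true_eq_false, and_false, if_false, Finset.sum_const_zero]
    rw [if_neg]
    intro h
    exact hR _ h (by simp)
  · have : ∀ e : Sym2 V, (w ∈ e ∧ y ∈ e ∧ y ≠ w) ↔ e = s(w, y) := by
      intro e
      rw [← Sym2.mem_and_mem_iff (Ne.symm hyw)]; tauto
    simp only [this]
    rw [Finset.sum_ite_eq']

/-- The edges of `R` inside `A` that contain the alive vertex `w` correspond to its neighbours. -/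
lemma sum_inside {A : Finset V} {R : Finset (Sym2 V)} (hR : ∀ e ∈ R, ¬ e.IsDiag) {w : V} (hw : w ∈ A)
    (F : Sym2 V → ℝ) :
    ∑ e ∈ R.filter (Inside A), (if w ∈ e then F e else 0) = ∑ y ∈ nb A R w, F s(w, y) := by
  rw [← sum_inc hR w (fun _ e => F e), Finset.sum_filter]
  apply Finset.sum_congr rfl
  intro e he
  by_cases hwe : w ∈ e
  · obtain ⟨z, rfl⟩ := hwe
    have hzw : z ≠ w := by rintro rfl; exact hR _ he (by simp)
    by_cases hz : z ∈ A
    · have hin : Inside A s(w, z) := by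
        intro y hy; rcases Sym2.mem_iff.1 hy with rfl | rfl <;> assumption
      rw [if_pos hin, Finset.sum_eq_single z]
      · simp [hzw]
      · intro y _ hyz
        simp only [Sym2.mem_iff, true_or, true_and, ite_eq_right_iff]
        rintro ⟨h | h, h'⟩ <;> contradiction
      · exact fun h => absurd hz h
    · have hin : ¬ Inside A s(w, z) := fun h => hz (h z (by simp))
      rw [if_neg hin, Finset.sum_eq_zero]
      intro y hy
      simp only [Sym2.mem_iff, true_or, true_and, ite_eq_right_iff]
      rintro ⟨h | h, h'⟩
      · contradiction
      · subst h; contradiction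
  · simp [hwe]

lemma sqrt_sub {a k : ℕ} (h : k ≤ a) (ha : 0 < a) :
    √((a - k : ℕ) : ℝ) - √(a : ℝ) ≤ - (1 / (2 * √(a : ℝ))) * k := by
  have h1 : (0:ℝ) < √(a : ℝ) := Real.sqrt_pos.2 (by exact_mod_cast ha)
  have h2 : √(a : ℝ) ^ 2 = a := Real.sq_sqrt (by positivity)
  have h3 : √((a - k : ℕ) : ℝ) ^ 2 = a - k := by
    rw [Real.sq_sqrt (by positivity)]; push_cast [h]; ring
  have h4 : - (1 / (2 * √(a : ℝ))) * k = -(k / (2 * √(a:ℝ))) := by ring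
  rw [h4, le_neg, div_le_iff₀ (by positivity)]
  nlinarith [sq_nonneg (√((a - k : ℕ) : ℝ) - √(a : ℝ))]

/-- Over all choices of an alive edge `e` satisfying `P`, deleting the endpoints of `e` lowers
`√(deg x)` in total by at least `1 / (2 √(deg x))` times the number of pairs (edge, neighbour of
`x` on it). This is concavity of the square root followed by double counting. -/
lemma decay {A : Finset V} {R : Finset (Sym2 V)} (hR : ∀ e ∈ R, ¬ e.IsDiag) {x : V}
    (ha : 0 < (nb A R x).card)
    (P : Sym2 V → Prop) [DecidablePred P] :
    ∑ e ∈ R.filter (Inside A), (if P e then sq (rm A e) (R.erase e) x - sq A R x else 0)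
      ≤ - (1 / (2 * sq A R x)) * ∑ y ∈ nb A R x, (((nb A R y).filter (fun z => P s(y, z))).card : ℝ) := by
  have key : ∀ e, sq (rm A e) (R.erase e) x - sq A R x
      ≤ - (1 / (2 * sq A R x)) * ∑ y ∈ nb A R x, (if y ∈ e then (1:ℝ) else 0) := by
    intro e
    have hc : ((nb A R x).filter (fun y => y ∉ e)).card
        = (nb A R x).card - ((nb A R x).filter (fun y => y ∈ e)).card := by
      have := Finset.card_filter_add_card_filter_not (s := nb A R x) (fun y => y ∈ e)
      omega
    have := sqrt_sub (Finset.card_le_card (Finset.filter_subset (fun y => y ∈ e) (nb A R x))) ha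
    rw [← hc] at this
    unfold sq
    rw [nb_rm]
    convert this using 2
    simp
  calc _ ≤ ∑ e ∈ R.filter (Inside A), - (1 / (2 * sq A R x)) *
        ∑ y ∈ nb A R x, (if y ∈ e then (if P e then (1:ℝ) else 0) else 0) := by
        apply Finset.sum_le_sum
        intro e _
        split_ifs with h
        · exact key e
        · simp
    _ = - (1 / (2 * sq A R x)) * ∑ y ∈ nb A R x, ∑ e ∈ R.filter (Inside A),
          (if y ∈ e then (if P e then (1:ℝ) else 0) else 0) := by
        rw [← Finset.mul_sum, Finset.sum_comm]
    _ = _ := by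
        congr 1
        apply Finset.sum_congr rfl
        intro y hy
        rw [sum_inside hR (mem_nb.1 hy).1 (fun e => if P e then (1:ℝ) else 0)]
        simp

/-! ### Drift of the value functions -/

lemma sqrt_amgm {x r c : ℝ} (hx : 0 ≤ x) (hr : 0 < r) : c * √x ≤ x / (2 * r) + c ^ 2 * r / 2 := by
  have h := Real.sq_sqrt hx
  have : x / (2 * r) + c ^ 2 * r / 2 - c * √x = (√x - c * r) ^ 2 / (2 * r) := by
    field_simp
    nlinarith
  have : 0 ≤ (√x - c * r) ^ 2 / (2 * r) := by positivity
  linarith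

lemma sq_sq (A : Finset V) (R : Finset (Sym2 V)) (x : V) : sq A R x ^ 2 = (nb A R x).card :=
  Real.sq_sqrt (by positivity)

/-- The total drift of the value of an unprocessed edge from a dead vertex to `x`. Processing that
edge turns its value `√(deg x)` into `gv x`; matching `x` destroys it; matching other vertices
decreases `deg x`. With `a = deg x`, the last two effects compensate `gv x` by the inequality
`√b ≤ b / (2 √a) + √a / 2`, applied to the degrees `b` of the neighbours of `x`. -/
lemma edge_drift {A : Finset V} {R : Finset (Sym2 V)} (hR : ∀ e ∈ R, ¬ e.IsDiag) {x : V}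
    (hx : x ∈ A) :
    gv A R x - sq A R x + ∑ e ∈ R.filter (Inside A),
      ((if x ∉ e then sq (rm A e) (R.erase e) x else 0) - sq A R x) ≤ 0 := by
  rcases Nat.eq_zero_or_pos (nb A R x).card with h0 | hpos
  · have hs : sq A R x = 0 := by simp [sq, h0]
    have hg : gv A R x = 0 := by
      unfold gv
      rw [h0, Finset.card_eq_zero.1 h0]; simp
    rw [hs, hg]
    have : ∑ e ∈ R.filter (Inside A),
      ((if x ∉ e then sq (rm A e) (R.erase e) x else 0) - 0) ≤ 0 := by
      apply Finset.sum_nonpos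
      intro e _
      have := sq_rm_le A R x e
      split_ifs <;> linarith
    linarith
  · have hr : 0 < sq A R x := Real.sqrt_pos.2 (by exact_mod_cast hpos)
    have hr2 := sq_sq A R x
    have hsplit : ∑ e ∈ R.filter (Inside A),
        ((if x ∉ e then sq (rm A e) (R.erase e) x else 0) - sq A R x)
        = ∑ e ∈ R.filter (Inside A), (if x ∉ e then sq (rm A e) (R.erase e) x - sq A R x else 0)
        + ∑ e ∈ R.filter (Inside A), (if x ∈ e then - sq A R x else 0) := by
      rw [← Finset.sum_add_distrib]
      apply Finset.sum_congr rfl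
      intro e _
      by_cases h : x ∈ e <;> simp [h]
    have hd := decay hR hpos (fun e => x ∉ e)
    have hcard : ∀ y ∈ nb A R x, (((nb A R y).filter (fun z => x ∉ s(y, z))).card : ℝ)
        = ((nb A R y).card : ℝ) - 1 := by
      intro y hy
      have hxy := mem_nb_comm hx hy
      have : (nb A R y).filter (fun z => x ∉ s(y, z)) = (nb A R y).erase x := by
        ext z
        have := nb_ne hR hy
        simp only [Finset.mem_filter, Sym2.mem_iff, Finset.mem_erase]
        grind
      rw [this, Finset.card_erase_of_mem hxy, Nat.cast_sub (Finset.card_pos.2 ⟨x, hxy⟩)]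
      simp
    rw [Finset.sum_congr rfl hcard] at hd
    rw [hsplit, sum_inside hR hx (fun _ => - sq A R x)]
    have hterm : ∑ y ∈ nb A R x, sq A R y ≤ ∑ y ∈ nb A R x,
        ((1 / (2 * sq A R x)) * (((nb A R y).card : ℝ) - 1) + (sq A R x / 2 + 1 / (2 * sq A R x))) := by
      apply Finset.sum_le_sum
      intro y _
      have := sqrt_amgm (x := ((nb A R y).card : ℝ)) (c := 1) (by positivity) hr
      have e : (1 / (2 * sq A R x)) * (((nb A R y).card : ℝ) - 1) + (sq A R x / 2 + 1 / (2 * sq A R x))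
        = ((nb A R y).card : ℝ) / (2 * sq A R x) + 1 ^ 2 * sq A R x / 2 := by ring
      rw [e]
      simpa [sq] using this
    rw [Finset.sum_add_distrib, ← Finset.mul_sum] at hterm
    simp only [Finset.sum_const, nsmul_eq_mul] at hterm ⊢
    unfold gv
    have e2 : ((nb A R x).card : ℝ) * (sq A R x / 2 + 1 / (2 * sq A R x))
        = ((nb A R x).card : ℝ) * sq A R x / 2 + sq A R x / 2 := by
      rw [← hr2]; field_simp
    rw [e2] at hterm
    linarith

lemma hv_rm_le {A : Finset V} {R : Finset (Sym2 V)} {u v : V} :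
    hv (rm A s(u, v)) (R.erase s(u, v)) u ≤ 1 / 8 + ∑ x ∈ (nb A R u).erase v, sq A R x := by
  unfold hv
  rw [nb_rm]
  gcongr
  calc _ ≤ ∑ x ∈ (nb A R u).filter (fun y => y ∉ s(u, v)), sq A R x :=
        Finset.sum_le_sum fun x _ => sq_rm_le A R x _
    _ ≤ _ := by
        apply Finset.sum_le_sum_of_subset_of_nonneg
        · intro x
          simp only [Finset.mem_filter, Sym2.mem_iff, Finset.mem_erase]
          tauto
        · intro x _ _; exact sq_nonneg' _ _ _

/-- The inequality left for a pair of adjacent alive vertices `u`, `v` of degrees `p²` and `r²`,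
with growth factor `9/8` (hence `81/128 = (9/8)²/2`). -/
lemma numeric {p r : ℝ} (hp : 1 ≤ p) (hr : 1 ≤ r) :
    9 / 32 + (9 / 8 * (p ^ 2 - 1) - p ^ 2) * r - 1 / 2 * p ^ 3
      + (81 / 128 - 1) * (r ^ 2 - 1) * r + (r ^ 2 - 1) / r ≤ 0 := by
  have h1 : (r ^ 2 - 1) / r ≤ r := by
    rw [div_le_iff₀ (by linarith)]; nlinarith
  have h2 : p ^ 2 * r ≤ p ^ 3 + r ^ 3 := by
    rcases le_total p r with h | h
    · have : p ^ 2 ≤ r ^ 2 := by gcongr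
      nlinarith [pow_pos (by linarith : 0 < p) 3]
    · have : p ^ 2 * r ≤ p ^ 2 * p := by gcongr
      nlinarith [pow_pos (by linarith : 0 < r) 3]
  have h3 : 1 ≤ p ^ 3 := one_le_pow₀ hp
  have h4 : r ≤ r ^ 3 := le_self_pow₀ hr (by norm_num)
  nlinarith

lemma gv_rm_sub_le {A : Finset V} {R : Finset (Sym2 V)} {u : V} (e : Sym2 V) :
    gv (rm A e) (R.erase e) u - gv A R u
      ≤ ∑ v ∈ nb A R u, ((if v ∉ e then sq (rm A e) (R.erase e) v else 0) - sq A R v) := by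
  unfold gv
  rw [Finset.sum_sub_distrib, ← Finset.sum_filter, ← nb_rm]
  have h1 := sq_rm_le A R u e
  have h2 : ((nb (rm A e) (R.erase e) u).card : ℝ) ≤ (nb A R u).card := by
    rw [nb_rm]; exact_mod_cast Finset.card_le_card (Finset.filter_subset _ _)
  have h3 := sq_nonneg' (rm A e) (R.erase e) u
  have : ((nb (rm A e) (R.erase e) u).card : ℝ) * sq (rm A e) (R.erase e) u
    ≤ (nb A R u).card * sq A R u := by gcongr
  linarith

/-- The total drift of the term `√(deg v)` of `gv u` over the choices of an edge avoiding `u`: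
edges at `v` remove the term, edges avoiding `v` but meeting its neighbours lower its degree. -/
lemma nbr_drift {A : Finset V} {R : Finset (Sym2 V)} (hR : ∀ e ∈ R, ¬ e.IsDiag) {u v : V}
    (hu : u ∈ A) (hv : v ∈ nb A R u) :
    ∑ e ∈ R.filter (Inside A), (if u ∉ e then
      ((if v ∉ e then sq (rm A e) (R.erase e) v else 0) - sq A R v) else 0)
    ≤ - (sq A R v ^ 2 - 1) * sq A R v
      - (1 / (2 * sq A R v)) * ∑ x ∈ (nb A R v).erase u, (((nb A R x).card : ℝ) - 2) := by
  have hvA : v ∈ A := (mem_nb.1 hv).1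
  have huv : u ∈ nb A R v := mem_nb_comm hu hv
  have hne : v ≠ u := nb_ne hR hv
  have hpos : 0 < (nb A R v).card := Finset.card_pos.2 ⟨u, huv⟩
  have hr : 0 < sq A R v := Real.sqrt_pos.2 (by exact_mod_cast hpos)
  have hsplit : ∑ e ∈ R.filter (Inside A), (if u ∉ e then
      ((if v ∉ e then sq (rm A e) (R.erase e) v else 0) - sq A R v) else 0)
      = ∑ e ∈ R.filter (Inside A), (if u ∉ e ∧ v ∉ e then sq (rm A e) (R.erase e) v - sq A R v else 0)
      + ∑ e ∈ R.filter (Inside A), (if v ∈ e then (if u ∉ e then - sq A R v else 0) else 0) := by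
    rw [← Finset.sum_add_distrib]
    apply Finset.sum_congr rfl
    intro e _
    by_cases h : v ∈ e <;> by_cases h' : u ∈ e <;> simp [h, h']
  have hd := decay hR hpos (fun e => u ∉ e ∧ v ∉ e)
  have hcount : ∑ y ∈ nb A R v, (if u ∉ s(v, y) then - sq A R v else 0)
      = - (sq A R v ^ 2 - 1) * sq A R v := by
    rw [← Finset.sum_filter]
    have : (nb A R v).filter (fun y => u ∉ s(v, y)) = (nb A R v).erase u := by
      ext z
      simp only [Finset.mem_filter, Sym2.mem_iff, Finset.mem_erase]
      grind
    rw [this, Finset.sum_const, Finset.card_erase_of_mem huv, nsmul_eq_mul,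
      Nat.cast_sub hpos, sq_sq]
    push_cast; ring
  have hcard : ∑ x ∈ (nb A R v).erase u, (((nb A R x).card : ℝ) - 2) ≤
      ∑ y ∈ nb A R v, (((nb A R y).filter (fun z => u ∉ s(y, z) ∧ v ∉ s(y, z))).card : ℝ) := by
    calc _ ≤ ∑ y ∈ (nb A R v).erase u,
          (((nb A R y).filter (fun z => u ∉ s(y, z) ∧ v ∉ s(y, z))).card : ℝ) := by
          apply Finset.sum_le_sum
          intro y hy
          rw [Finset.mem_erase] at hy
          have hyv := nb_ne hR hy.2
          have hsub : (nb A R y) \ {u, v} ⊆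
              (nb A R y).filter (fun z => u ∉ s(y, z) ∧ v ∉ s(y, z)) := by
            intro z
            simp only [Finset.mem_filter, Sym2.mem_iff, Finset.mem_sdiff, Finset.mem_insert,
              Finset.mem_singleton]
            grind
          have h1 := Finset.card_le_card hsub
          have h2 := Finset.le_card_sdiff {u, v} (nb A R y)
          have h3 : ({u, v} : Finset V).card ≤ 2 := Finset.card_le_two
          have : (nb A R y).card ≤
            ((nb A R y).filter (fun z => u ∉ s(y, z) ∧ v ∉ s(y, z))).card + 2 := by omega
          have : ((nb A R y).card : ℝ) ≤
            (((nb A R y).filter (fun z => u ∉ s(y, z) ∧ v ∉ s(y, z))).card : ℝ) + 2 := by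
            exact_mod_cast this
          linarith
      _ ≤ _ := by
          apply Finset.sum_le_sum_of_subset_of_nonneg (Finset.erase_subset _ _)
          intros; positivity
  rw [hsplit, sum_inside hR hvA (fun e => if u ∉ e then - sq A R v else 0), hcount]
  have : (1 / (2 * sq A R v)) * ∑ x ∈ (nb A R v).erase u, (((nb A R x).card : ℝ) - 2) ≤
    (1 / (2 * sq A R v)) *
      ∑ y ∈ nb A R v, (((nb A R y).filter (fun z => u ∉ s(y, z) ∧ v ∉ s(y, z))).card : ℝ) := by
    gcongr
  linarith

/-- The total drift of the value of an alive vertex `u`: matching `u` to `v` replaces it by `9/8`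
times the values of the dead vertices `u` and `v`; every other match only lowers it. -/
lemma alive_drift {A : Finset V} {R : Finset (Sym2 V)} (hR : ∀ e ∈ R, ¬ e.IsDiag) {u : V}
    (hu : u ∈ A) :
    ∑ v ∈ nb A R u, (9 / 8 * (hv (rm A s(u, v)) (R.erase s(u, v)) u
        + hv (rm A s(u, v)) (R.erase s(u, v)) v) - gv A R u)
      + ∑ e ∈ R.filter (Inside A), (if u ∉ e then gv (rm A e) (R.erase e) u - gv A R u else 0)
      ≤ 0 := by
  have h2 : ∑ e ∈ R.filter (Inside A), (if u ∉ e then gv (rm A e) (R.erase e) u - gv A R u else 0)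
      ≤ ∑ v ∈ nb A R u, (- (sq A R v ^ 2 - 1) * sq A R v
      - (1 / (2 * sq A R v)) * ∑ x ∈ (nb A R v).erase u, (((nb A R x).card : ℝ) - 2)) := by
    calc _ ≤ ∑ e ∈ R.filter (Inside A), ∑ v ∈ nb A R u, (if u ∉ e then
      ((if v ∉ e then sq (rm A e) (R.erase e) v else 0) - sq A R v) else 0) := by
          apply Finset.sum_le_sum
          intro e _
          by_cases h : u ∈ e
          · simp [h]
          · simpa [h] using gv_rm_sub_le (A := A) (R := R) (u := u) e
      _ ≤ _ := by
          rw [Finset.sum_comm]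
          exact Finset.sum_le_sum fun v hv => nbr_drift hR hu hv
  set p := sq A R u with hp
  set S := ∑ v ∈ nb A R u, sq A R v with hS
  have hp2 : p ^ 2 = (nb A R u).card := sq_sq A R u
  have h1 : ∀ v ∈ nb A R u, (9 / 8 * (hv (rm A s(u, v)) (R.erase s(u, v)) u
        + hv (rm A s(u, v)) (R.erase s(u, v)) v) - gv A R u)
      ≤ (9 / 8 * (1 / 4 + (S - sq A R v) + ∑ x ∈ (nb A R v).erase u, sq A R x)
        - (S + 1 / 2 * p ^ 3)) := by
    intro v hv'
    have e1 := hv_rm_le (A := A) (R := R) (u := u) (v := v)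
    have e2 := hv_rm_le (A := A) (R := R) (u := v) (v := u)
    rw [Sym2.eq_swap (a := v) (b := u)] at e2
    have e3 : ∑ x ∈ (nb A R u).erase v, sq A R x = S - sq A R v :=
      Finset.sum_erase_eq_sub hv'
    have e4 : gv A R u = S + 1 / 2 * p ^ 3 := by
      unfold gv; rw [← hp2, ← hS, ← hp]; ring
    rw [e3] at e1
    linarith
  -- The gain through the neighbours `x` of `v` is paid for by the decay of `√(deg v)`.
  have h3 : ∀ v ∈ nb A R u, 9 / 8 * ∑ x ∈ (nb A R v).erase u, sq A R x
      - (1 / (2 * sq A R v)) * ∑ x ∈ (nb A R v).erase u, (((nb A R x).card : ℝ) - 2)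
      ≤ 81 / 128 * (sq A R v ^ 2 - 1) * sq A R v + (sq A R v ^ 2 - 1) / sq A R v := by
    intro v hv
    have huv : u ∈ nb A R v := mem_nb_comm hu hv
    have hpos : 0 < (nb A R v).card := Finset.card_pos.2 ⟨u, huv⟩
    have hr : 0 < sq A R v := Real.sqrt_pos.2 (by exact_mod_cast hpos)
    rw [Finset.mul_sum, Finset.mul_sum, ← Finset.sum_sub_distrib]
    calc _ ≤ ∑ x ∈ (nb A R v).erase u, (81 / 128 * sq A R v + 1 / sq A R v) := by
          apply Finset.sum_le_sum
          intro x _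
          have := sqrt_amgm (x := ((nb A R x).card : ℝ)) (c := 9 / 8) (by positivity) hr
          have e : 1 / (2 * sq A R v) * (((nb A R x).card : ℝ) - 2)
            = ((nb A R x).card : ℝ) / (2 * sq A R v) - 1 / sq A R v := by field_simp
          rw [e]
          change 9 / 8 * sq A R x ≤ _ at this
          linarith
      _ = _ := by
          rw [Finset.sum_const, Finset.card_erase_of_mem huv, nsmul_eq_mul, Nat.cast_sub hpos, sq_sq]
          push_cast; ring
  have h4 : ∑ v ∈ nb A R u, (9 / 32 + (9 / 8 * (p ^ 2 - 1) - p ^ 2) * sq A R v - 1 / 2 * p ^ 3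
      + (81 / 128 - 1) * (sq A R v ^ 2 - 1) * sq A R v + (sq A R v ^ 2 - 1) / sq A R v) ≤ 0 := by
    apply Finset.sum_nonpos
    intro v hv
    have hone : ∀ w, 0 < (nb A R w).card → 1 ≤ sq A R w := by
      intro w hw
      rw [sq, Real.one_le_sqrt]
      exact_mod_cast hw
    exact numeric (hone u (Finset.card_pos.2 ⟨v, hv⟩))
      (hone v (Finset.card_pos.2 ⟨u, mem_nb_comm hu hv⟩))
  have h5 : ∑ v ∈ nb A R u, (1 / 8 * S) = ∑ v ∈ nb A R u, (1 / 8 * p ^ 2 * sq A R v) := by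
    rw [Finset.sum_const, ← Finset.mul_sum, nsmul_eq_mul, ← hp2]; ring
  have h6 : ∑ v ∈ nb A R u, ((9 / 8 * (1 / 4 + (S - sq A R v) + ∑ x ∈ (nb A R v).erase u, sq A R x)
        - (S + 1 / 2 * p ^ 3)) + (- (sq A R v ^ 2 - 1) * sq A R v
      - (1 / (2 * sq A R v)) * ∑ x ∈ (nb A R v).erase u, (((nb A R x).card : ℝ) - 2)))
      ≤ ∑ v ∈ nb A R u, ((9 / 32 + (9 / 8 * (p ^ 2 - 1) - p ^ 2) * sq A R v - 1 / 2 * p ^ 3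
      + (81 / 128 - 1) * (sq A R v ^ 2 - 1) * sq A R v + (sq A R v ^ 2 - 1) / sq A R v)
      + (1 / 8 * S - 1 / 8 * p ^ 2 * sq A R v)) := by
    apply Finset.sum_le_sum
    intro v hv
    have := h3 v hv
    linarith
  rw [Finset.sum_add_distrib, Finset.sum_add_distrib, Finset.sum_sub_distrib (f := fun _ => 1 / 8 * S)] at h6
  have h7 := Finset.sum_le_sum h1
  linarith

/-! ### The sequential process and its potential -/

/-- The value of a unit of weight at `w`, alive or dead. -/
def cv (A : Finset V) (R : Finset (Sym2 V)) (w : V) : ℝ := if w ∈ A then gv A R w else hv A R w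

/-- A state of the sequential greedy process: the set `A` of alive (unmatched) vertices, the set
`R` of edges not yet processed, and a weight `W` on all vertices. A weight bounds `(9/8) ^ r` from
above, where `r` is the round by which, for a dead vertex, it has been matched by the parallel
algorithm, and for an alive vertex, its processed edges have been removed by it. -/
structure St (V : Type) where
  A : Finset V
  R : Finset (Sym2 V)
  W : V → ℝ

/-- The potential: total weight, each unit counted with its value. -/
def pot (s : St V) : ℝ := ∑ w, s.W w * cv s.A s.R w

/-- Processing the edge `e`. If both endpoints are alive, they are matched and both receive `9/8`
times the sum of their weights. If exactly one is alive, the weight of the dead endpoint is added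
to it. Otherwise no weight changes. -/
def stp (s : St V) (e : Sym2 V) : St V where
  A := if Inside s.A e then rm s.A e else s.A
  R := s.R.erase e
  W := fun w =>
    if Inside s.A e then
      (if w ∈ e then 9 / 8 * ∑ z, (if z ∈ e then s.W z else 0) else s.W w)
    else s.W w + (if w ∈ e ∧ w ∈ s.A then ∑ z, (if z ∈ e ∧ z ∉ s.A then s.W z else 0) else 0)

/-- The coefficient of the weight `W w` in the potential after processing `e`, which is linear in
the weights before processing. -/
def coef (A : Finset V) (R : Finset (Sym2 V)) (w : V) (e : Sym2 V) : ℝ :=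
  if Inside A e then
    (if w ∈ e then 9 / 8 * ∑ z, (if z ∈ e then hv (rm A e) (R.erase e) z else 0)
      else cv (rm A e) (R.erase e) w)
  else cv A (R.erase e) w + (if w ∈ e ∧ w ∉ A then
    ∑ z, (if z ∈ e ∧ z ∈ A then gv A (R.erase e) z else 0) else 0)

lemma sum_swap (P Q : V → Prop) [DecidablePred P] [DecidablePred Q] (f g : V → ℝ) :
    ∑ w, (if P w then ∑ z, (if Q z then f z else 0) else 0) * g w
      = ∑ z, f z * (if Q z then ∑ w, (if P w then g w else 0) else 0) := by
  have h1 : ∀ w, (if P w then ∑ z, (if Q z then f z else 0) else 0) * g w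
      = (∑ z, (if Q z then f z else 0)) * (if P w then g w else 0) := by
    intro w; split_ifs <;> simp
  have h2 : ∀ z, f z * (if Q z then ∑ w, (if P w then g w else 0) else 0)
      = (if Q z then f z else 0) * ∑ w, (if P w then g w else 0) := by
    intro w; split_ifs <;> simp
  simp only [h1, h2]
  rw [← Finset.mul_sum, ← Finset.sum_mul]

lemma pot_stp (s : St V) (e : Sym2 V) : pot (stp s e) = ∑ w, s.W w * coef s.A s.R w e := by
  by_cases he : Inside s.A e
  · simp only [pot, stp, coef, if_pos he]
    have h1 : ∀ w, (if w ∈ e then 9 / 8 * ∑ z, (if z ∈ e then s.W z else 0) else s.W w) *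
        cv (rm s.A e) (s.R.erase e) w
        = 9 / 8 * ((if w ∈ e then ∑ z, (if z ∈ e then s.W z else 0) else 0) *
            hv (rm s.A e) (s.R.erase e) w)
          + s.W w * (if w ∈ e then 0 else cv (rm s.A e) (s.R.erase e) w) := by
      intro w
      by_cases hw : w ∈ e
      · have : w ∉ rm s.A e := by simp [rm, hw]
        simp only [hw, if_true, cv, this, if_false]; ring
      · simp [hw]
    have h2 : ∀ w, s.W w * (if w ∈ e then 9 / 8 * ∑ z, (if z ∈ e then hv (rm s.A e) (s.R.erase e) z else 0)
          else cv (rm s.A e) (s.R.erase e) w)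
        = 9 / 8 * (s.W w * (if w ∈ e then ∑ z, (if z ∈ e then hv (rm s.A e) (s.R.erase e) z else 0) else 0))
          + s.W w * (if w ∈ e then 0 else cv (rm s.A e) (s.R.erase e) w) := by
      intro w
      by_cases hw : w ∈ e
      · simp only [hw, if_true]; ring
      · simp [hw]
    simp only [h1, h2]
    rw [Finset.sum_add_distrib, Finset.sum_add_distrib, ← Finset.mul_sum, ← Finset.mul_sum, sum_swap]
  · simp only [pot, stp, coef, if_neg he, add_mul, mul_add]
    rw [Finset.sum_add_distrib, Finset.sum_add_distrib, sum_swap]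
    congr 1
    apply Finset.sum_congr rfl
    intro w _
    congr 2
    apply Finset.sum_congr rfl
    intro z _
    by_cases hz : z ∈ e ∧ z ∈ s.A
    · simp [hz, cv]
    · simp [hz]

lemma sum_mem_pair {u v : V} (huv : u ≠ v) (f : V → ℝ) :
    ∑ z, (if z ∈ s(u, v) then f z else 0) = f u + f v := by
  rw [← Finset.sum_filter]
  have : Finset.univ.filter (fun z => z ∈ s(u, v)) = {u, v} := by ext; simp
  rw [this, Finset.sum_pair huv]

lemma coef_alive {A : Finset V} {R : Finset (Sym2 V)} (hR : ∀ e ∈ R, ¬ e.IsDiag) {u : V}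
    (hu : u ∈ A) : ∑ e ∈ R, (coef A R u e - cv A R u) ≤ 0 := by
  refine le_trans (le_of_eq ?_) (alive_drift hR hu)
  have h1 : ∑ v ∈ nb A R u, (9 / 8 * (hv (rm A s(u, v)) (R.erase s(u, v)) u
        + hv (rm A s(u, v)) (R.erase s(u, v)) v) - gv A R u)
      = ∑ v ∈ nb A R u, (9 / 8 * ∑ z, (if z ∈ s(u, v) then
        hv (rm A s(u, v)) (R.erase s(u, v)) z else 0) - gv A R u) := by
    apply Finset.sum_congr rfl
    intro v hv
    rw [sum_mem_pair (nb_ne hR hv).symm]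
  rw [h1, ← sum_inside hR hu (fun e => 9 / 8 * ∑ z, (if z ∈ e then
        hv (rm A e) (R.erase e) z else 0) - gv A R u), ← Finset.sum_add_distrib, Finset.sum_filter]
  apply Finset.sum_congr rfl
  intro e _
  by_cases he : Inside A e
  · by_cases hue : u ∈ e
    · simp [coef, he, hue, cv, hu]
    · have : u ∈ rm A e := by simp [rm, hu, hue]
      simp [coef, he, hue, cv, hu, this]
  · have : gv A (R.erase e) u = gv A R u := by
      unfold gv sq
      rw [nb_erase hu he]
      congr 1
      apply Finset.sum_congr rfl
      intro v hv
      rw [nb_erase (mem_nb.1 hv).1 he]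
    simp [coef, he, cv, hu, this]

lemma coef_dead {A : Finset V} {R : Finset (Sym2 V)} (hR : ∀ e ∈ R, ¬ e.IsDiag) {w : V}
    (hw : w ∉ A) : ∑ e ∈ R, (coef A R w e - cv A R w) ≤ 0 := by
  have main : ∑ e ∈ R, (coef A R w e - cv A R w) = ∑ x ∈ nb A R w,
      (gv A R x - sq A R x + ∑ e ∈ R.filter (Inside A),
      ((if x ∉ e then sq (rm A e) (R.erase e) x else 0) - sq A R x)) := by
    rw [Finset.sum_add_distrib, ← sum_inc hR w (fun x _ => gv A R x - sq A R x),
      Finset.sum_comm (s := nb A R w), Finset.sum_filter, ← Finset.sum_add_distrib]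
    apply Finset.sum_congr rfl
    intro e heR
    by_cases he : Inside A e
    · have hwe : w ∉ e := fun h => hw (he w h)
      have hw' : w ∉ rm A e := by simp [rm, hw]
      simp only [coef, he, if_true, hwe, if_false, cv, hw, hw', false_and, Finset.sum_const_zero,
        zero_add]
      unfold hv
      rw [nb_rm, Finset.sum_sub_distrib, Finset.sum_filter]
      ring
    · simp only [coef, he, if_false, cv, hw, not_false_eq_true, and_true, add_zero]
      have hsq : ∀ x ∈ A, sq A (R.erase e) x = sq A R x := by
        intro x hx; unfold sq; rw [nb_erase hx he]
      have hgv : ∀ x ∈ A, gv A (R.erase e) x = gv A R x := by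
        intro x hx; unfold gv
        rw [hsq x hx, nb_erase hx he]
        congr 1
        apply Finset.sum_congr rfl
        intro v hv
        exact hsq v (mem_nb.1 hv).1
      have h1 : hv A (R.erase e) w - hv A R w
          = ∑ x ∈ A, (if w ∈ e ∧ x ∈ e ∧ x ≠ w then - sq A R x else 0) := by
        unfold hv nb
        rw [Finset.sum_filter, Finset.sum_filter, add_sub_add_left_eq_sub, ← Finset.sum_sub_distrib]
        apply Finset.sum_congr rfl
        intro x hx
        have hxw : x ≠ w := by rintro rfl; exact hw hx
        have : (w ∈ e ∧ x ∈ e ∧ x ≠ w) ↔ s(w, x) = e := by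
          rw [eq_comm, ← Sym2.mem_and_mem_iff (Ne.symm hxw)]; tauto
        simp only [this, hsq x hx]
        by_cases hxe : s(w, x) = e
        · simp [hxe, heR]
        · simp [hxe]
      have h2 : (if w ∈ e then ∑ z, (if z ∈ e ∧ z ∈ A then gv A (R.erase e) z else 0) else 0)
          = ∑ x ∈ A, (if w ∈ e ∧ x ∈ e ∧ x ≠ w then gv A R x else 0) := by
        have : ∑ x ∈ A, (if w ∈ e ∧ x ∈ e ∧ x ≠ w then gv A R x else 0)
          = ∑ x, (if x ∈ A then (if w ∈ e ∧ x ∈ e ∧ x ≠ w then gv A R x else 0) else 0) := by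
          simp
        rw [this]
        by_cases hwe : w ∈ e
        · simp only [hwe, if_true]
          apply Finset.sum_congr rfl
          intro z _
          by_cases hz : z ∈ A
          · have hxw : z ≠ w := by rintro rfl; exact hw hz
            simp [hz, hxw, hgv z hz]
          · simp [hz]
        · simp [hwe]
      have h3 : ∀ x, (if w ∈ e ∧ x ∈ e ∧ x ≠ w then gv A R x - sq A R x else 0)
        = (if w ∈ e ∧ x ∈ e ∧ x ≠ w then gv A R x else 0)
         + (if w ∈ e ∧ x ∈ e ∧ x ≠ w then - sq A R x else 0) := by
        intro x; split_ifs <;> ring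
      rw [h2, Finset.sum_congr rfl (fun x _ => h3 x), Finset.sum_add_distrib, ← h1]
      ring
  rw [main]
  exact Finset.sum_nonpos fun x hx => edge_drift hR (mem_nb.1 hx).1

/-- The potential is a supermartingale: its average after processing a uniformly chosen remaining
edge is at most its present value. -/
lemma pot_drift (s : St V) (hR : ∀ e ∈ s.R, ¬ e.IsDiag) (hW : ∀ w, 0 ≤ s.W w) :
    ∑ e ∈ s.R, pot (stp s e) ≤ s.R.card * pot s := by
  have : ∑ e ∈ s.R, pot (stp s e) - s.R.card * pot s
      = ∑ w, s.W w * ∑ e ∈ s.R, (coef s.A s.R w e - cv s.A s.R w) := by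
    simp only [pot_stp, Finset.mul_sum]
    rw [Finset.sum_comm]
    unfold pot
    rw [Finset.mul_sum, ← Finset.sum_sub_distrib]
    apply Finset.sum_congr rfl
    intro w _
    simp only [mul_sub]
    rw [Finset.sum_sub_distrib, Finset.sum_const, nsmul_eq_mul]
  have h2 : ∑ w, s.W w * ∑ e ∈ s.R, (coef s.A s.R w e - cv s.A s.R w) ≤ 0 := by
    apply Finset.sum_nonpos
    intro w _
    apply mul_nonpos_of_nonneg_of_nonpos (hW w)
    by_cases hw : w ∈ s.A
    · exact coef_alive hR hw
    · exact coef_dead hR hw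
  linarith

lemma stp_W_nonneg (s : St V) (hW : ∀ w, 0 ≤ s.W w) (e : Sym2 V) (w : V) : 0 ≤ (stp s e).W w := by
  have h1 : ∀ (P : V → Prop) [DecidablePred P], 0 ≤ ∑ z, (if P z then s.W z else 0) := by
    intro P _
    apply Finset.sum_nonneg
    intro z _
    split_ifs
    exacts [hW z, le_rfl]
  simp only [stp]
  have a1 := h1 (fun z => z ∈ e)
  have a2 := h1 (fun z => z ∈ e ∧ z ∉ s.A)
  have a3 := hW w
  split_ifs <;> linarith

/-! ### Averaging over orders -/

section Averaging

variable {α S : Type} [Fintype α] [DecidableEq α]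

/-- The state after `k` steps when items are presented in the order `τ`; constant from `k = m` on. -/
def run {m : ℕ} (step : S → α → S) (init : S) (τ : Fin m → α) : ℕ → S
  | 0 => init
  | k + 1 => if h : k < m then step (run step init τ k) (τ ⟨k, h⟩) else run step init τ k

lemma run_congr {m : ℕ} (step : S → α → S) (init : S) (τ τ' : Fin m → α) (k : ℕ)
    (h : ∀ i : Fin m, i.1 < k → τ i = τ' i) : run step init τ k = run step init τ' k := by
  induction k with
  | zero => rfl
  | succ k ih =>
    simp only [run]
    rw [ih fun i hi => h i (by omega)]
    split_ifs with hk
    · rw [h ⟨k, hk⟩ (by simp)]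
    · rfl

/-- If the average of `Φ` over the next item, chosen among the remaining ones, never exceeds the
present value, then the sum of `Φ` over all orders does not grow with time. Exchanging the item at
position `k` with the one at a later position `j` permutes the orders and fixes the first `k`
steps, so the item at position `k` may be taken uniform among the remaining ones. -/
lemma run_avg {m : ℕ} (step : S → α → S) (init : S) (Φ : S → ℝ)
    (hstep : ∀ (τ : Fin m ≃ α) (k : ℕ), k < m →
      ∑ j ∈ Finset.univ.filter (fun j : Fin m => k ≤ j.1), Φ (step (run step init τ k) (τ j))
        ≤ (m - k : ℕ) * Φ (run step init τ k)) (k : ℕ) (hk : k ≤ m) :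
    ∑ τ : Fin m ≃ α, Φ (run step init τ k) ≤ ∑ _τ : Fin m ≃ α, Φ init := by
  induction k with
  | zero => simp [run]
  | succ k ih =>
    have hk' : k < m := hk
    refine le_trans ?_ (ih hk'.le)
    have hswap : ∀ j : Fin m, k ≤ j.1 → ∑ τ : Fin m ≃ α, Φ (run step init τ (k + 1))
        = ∑ τ : Fin m ≃ α, Φ (step (run step init τ k) (τ j)) := by
      intro j hj
      rw [← Equiv.sum_comp (Equiv.equivCongr (Equiv.swap ⟨k, hk'⟩ j) (Equiv.refl α))]
      apply Finset.sum_congr rfl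
      intro τ _
      simp only [run, dif_pos hk']
      congr 2
      · apply run_congr
        intro i hi
        have h1 : i ≠ ⟨k, hk'⟩ := by rintro rfl; simp at hi
        have h2 : i ≠ j := by rintro rfl; omega
        simp [Equiv.equivCongr, Equiv.swap_apply_of_ne_of_ne h1 h2]
      · simp [Equiv.equivCongr]
    have hcard : (Finset.univ.filter (fun j : Fin m => k ≤ j.1)).card = m - k := by
      have : Finset.univ.filter (fun j : Fin m => k ≤ j.1) = Finset.Ici ⟨k, hk'⟩ := by
        ext j; simp [Fin.le_def]
      rw [this, Fin.card_Ici]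
    have h1 : ((m - k : ℕ) : ℝ) * ∑ τ : Fin m ≃ α, Φ (run step init τ (k + 1))
        ≤ ((m - k : ℕ) : ℝ) * ∑ τ : Fin m ≃ α, Φ (run step init τ k) := by
      calc _ = ∑ j ∈ Finset.univ.filter (fun j : Fin m => k ≤ j.1),
            ∑ τ : Fin m ≃ α, Φ (run step init τ (k + 1)) := by
            rw [Finset.sum_const, hcard, nsmul_eq_mul]
        _ = ∑ j ∈ Finset.univ.filter (fun j : Fin m => k ≤ j.1),
            ∑ τ : Fin m ≃ α, Φ (step (run step init τ k) (τ j)) := by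
            apply Finset.sum_congr rfl
            intro j hj
            exact hswap j (by simpa using hj)
        _ = ∑ τ : Fin m ≃ α, ∑ j ∈ Finset.univ.filter (fun j : Fin m => k ≤ j.1),
            Φ (step (run step init τ k) (τ j)) := Finset.sum_comm
        _ ≤ _ := by
            rw [Finset.mul_sum]
            exact Finset.sum_le_sum fun τ _ => hstep τ k hk'
    have : (0:ℝ) < ((m - k : ℕ) : ℝ) := by
      have : 0 < m - k := by omega
      exact_mod_cast this
    exact le_of_mul_le_mul_left h1 this

end Averaging

/-! ### Weights bound the parallel rounds -/

lemma residual_antitone (G : SimpleGraph V) (π : Sym2 V → ℕ) : Antitone (residual G π) :=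
  antitone_nat_of_succ_le fun _ => Set.sdiff_subset

/-- The invariant of a dead vertex `v` of weight `w` after the edges of rank at most `k` are
processed: it has a partner `z`, along a processed edge, that leaves the parallel algorithm in the
same round, and it is gone after some number `r` of rounds with `(9/8) ^ r ≤ w`. -/
def DeadOK (G : SimpleGraph V) (π : Sym2 V → ℕ) (k : ℕ) (w : ℝ) (v : V) : Prop :=
  (∃ z, s(v, z) ∈ G.edgeSet ∧ π s(v, z) ≤ k ∧ ∀ q, v ∈ residual G π q ↔ z ∈ residual G π q) ∧
    ∃ r, v ∉ residual G π r ∧ (9 / 8 : ℝ) ^ r ≤ w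

/-- The invariant of an alive vertex `x` of weight `w`: for some `r` with `(9/8) ^ r ≤ w`, every
processed edge `xy` has a dead end `y` that is gone after `r` rounds, and whose partner edge `yz`
precedes `xy`. -/
def AliveOK (G : SimpleGraph V) (π : Sym2 V → ℕ) (A : Finset V) (k : ℕ) (w : ℝ) (x : V) : Prop :=
  ∃ r, (9 / 8 : ℝ) ^ r ≤ w ∧ ∀ y, s(x, y) ∈ G.edgeSet → π s(x, y) ≤ k →
    y ∉ A ∧ y ∉ residual G π r ∧
      ∃ z, s(y, z) ∈ G.edgeSet ∧ π s(y, z) < π s(x, y) ∧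
        ∀ q, y ∈ residual G π q ↔ z ∈ residual G π q

/-- A parallel round that matches `u`, while the next edge `e` at `u` is still present, matches
it along `e`: a processed edge `uy` is beaten by the partner edge of `y`. -/
lemma localMin_eq {G : SimpleGraph V} {π : Sym2 V → ℕ} {A : Finset V} {k : ℕ} {w : ℝ} {u : V}
    (hu : AliveOK G π A k w u) {e f : Sym2 V} {q : ℕ} (heG : e ∈ G.edgeSet) (hue : u ∈ e)
    (hek : π e = k + 1) (hin : ∀ x ∈ e, x ∈ residual G π q)
    (hf : localMin G π (residual G π q) f) (huf : u ∈ f) : f = e := by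
  by_contra hne
  obtain ⟨hfG, hfin, hmin⟩ := hf
  have h1 := hmin e heG hin ⟨u, huf, hue⟩ (Ne.symm hne)
  obtain ⟨y, rfl⟩ := huf
  obtain ⟨r, -, h⟩ := hu
  obtain ⟨-, -, z, hz1, hz2, hz3⟩ := h y hfG (by omega)
  have hy : y ∈ residual G π q := hfin y (by simp)
  have h2 := hmin s(y, z) hz1
    (by intro x hx; rcases Sym2.mem_iff.1 hx with rfl | rfl
        · exact hy
        · exact (hz3 q).1 hy) ⟨y, by simp, by simp⟩
    (by intro h; rw [h] at hz2; exact lt_irrefl _ hz2)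
  omega

lemma matched_together {G : SimpleGraph V} {π : Sym2 V → ℕ} {A : Finset V} {k : ℕ} {wu wv : ℝ}
    {u v : V} (hu : AliveOK G π A k wu u) (hv : AliveOK G π A k wv v)
    (heG : s(u, v) ∈ G.edgeSet) (hek : π s(u, v) = k + 1) (q : ℕ) :
    u ∈ residual G π q ↔ v ∈ residual G π q := by
  induction q with
  | zero => simp [residual]
  | succ q ih =>
    by_cases huq : u ∈ residual G π q
    · have hvq := ih.1 huq
      have hin : ∀ x ∈ s(u, v), x ∈ residual G π q := by
        intro x hx; rcases Sym2.mem_iff.1 hx with rfl | rfl <;> assumption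
      simp only [residual, stepRGMM, Set.mem_sdiff, huq, hvq, true_and, Set.mem_ofPred_eq]
      rw [not_iff_not]
      constructor
      · rintro ⟨f, hf, huf⟩
        refine ⟨f, hf, ?_⟩
        rw [localMin_eq hu heG (by simp) hek hin hf huf]; simp
      · rintro ⟨f, hf, huf⟩
        refine ⟨f, hf, ?_⟩
        rw [localMin_eq hv heG (by simp) hek hin hf huf]; simp
    · have hvq : v ∉ residual G π q := fun h => huq (ih.2 h)
      exact ⟨fun h => absurd (residual_antitone G π (Nat.le_succ q) h) huq,
        fun h => absurd (residual_antitone G π (Nat.le_succ q) h) hvq⟩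

lemma matched_dead {G : SimpleGraph V} {π : Sym2 V → ℕ} {A : Finset V} {k : ℕ} {wu wv : ℝ}
    {u v : V} (hu : AliveOK G π A k wu u) (hv : AliveOK G π A k wv v)
    (heG : s(u, v) ∈ G.edgeSet) (hek : π s(u, v) = k + 1)
    (hinj : ∀ f ∈ G.edgeSet, π f = k + 1 → f = s(u, v)) :
    DeadOK G π (k + 1) (9 / 8 * (wu + wv)) u := by
  have htog := matched_together hu hv heG hek
  refine ⟨⟨v, heG, hek.le, htog⟩, ?_⟩
  obtain ⟨ru, hru, hu⟩ := hu
  obtain ⟨rv, hrv, hv⟩ := hv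
  refine ⟨max ru rv + 1, ?_, ?_⟩
  · intro hmem
    have hur := residual_antitone G π (Nat.le_succ _) hmem
    have hvr := (htog _).1 hur
    refine hmem.2 ⟨s(u, v), ⟨heG, ?_, ?_⟩, by simp⟩
    · intro x hx; rcases Sym2.mem_iff.1 hx with rfl | rfl <;> assumption
    · rintro f hfG hfin ⟨x, hxe, hxf⟩ hne
      by_contra hlt
      have hle : π f ≤ k := by
        have : π f ≠ k + 1 := fun h => hne (hinj f hfG h)
        omega
      obtain ⟨y, rfl⟩ := hxf
      have hy := hfin y (by simp)
      rcases Sym2.mem_iff.1 hxe with rfl | rfl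
      · exact (hu y hfG hle).2.1 (residual_antitone G π (le_max_left _ _) hy)
      · exact (hv y hfG hle).2.1 (residual_antitone G π (le_max_right _ _) hy)
  · rw [pow_succ, mul_comm]
    have h1 : (0:ℝ) < (9 / 8) ^ ru := by positivity
    have h2 : (0:ℝ) < (9 / 8) ^ rv := by positivity
    rcases le_total ru rv with h | h
    · rw [max_eq_right h]; linarith
    · rw [max_eq_left h]; linarith

/-- The invariant of the sequential process after the edges of rank at most `k` are processed. -/
def Inv (G : SimpleGraph V) (π : Sym2 V → ℕ) (k : ℕ) (s : St V) : Prop :=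
  (∀ w, 0 ≤ s.W w) ∧ (∀ v, v ∉ s.A → DeadOK G π k (s.W v) v) ∧
    ∀ x ∈ s.A, AliveOK G π s.A k (s.W x) x

lemma DeadOK.mono {G : SimpleGraph V} {π : Sym2 V → ℕ} {k : ℕ} {w w' : ℝ} {v : V}
    (h : DeadOK G π k w v) (hw : w ≤ w') : DeadOK G π (k + 1) w' v := by
  obtain ⟨⟨z, h1, h2, h3⟩, r, h4, h5⟩ := h
  exact ⟨⟨z, h1, by omega, h3⟩, r, h4, h5.trans hw⟩

/-- The invariant persists at an alive vertex that the newly processed edge `e` does not touch. -/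
lemma AliveOK.mono {G : SimpleGraph V} {π : Sym2 V → ℕ} {A A' : Finset V} {k : ℕ} {w w' : ℝ} {x : V}
    {e : Sym2 V} (h : AliveOK G π A k w x) (hw : w ≤ w') (hA : A' ⊆ A) (hx : x ∉ e)
    (hinj : ∀ f ∈ G.edgeSet, π f = k + 1 → f = e) : AliveOK G π A' (k + 1) w' x := by
  obtain ⟨r, h1, h2⟩ := h
  refine ⟨r, h1.trans hw, fun y hy hk => ?_⟩
  have : π s(x, y) ≠ k + 1 := by
    intro h
    apply hx
    rw [← hinj _ hy h]; simp
  obtain ⟨h3, h4, h5⟩ := h2 y hy (by omega)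
  exact ⟨fun h => h3 (hA h), h4, h5⟩

lemma Inv.step {G : SimpleGraph V} {π : Sym2 V → ℕ} {k : ℕ} {s : St V} (h : Inv G π k s)
    {e : Sym2 V} (heG : e ∈ G.edgeSet) (hek : π e = k + 1)
    (hinj : ∀ f ∈ G.edgeSet, π f = k + 1 → f = e) : Inv G π (k + 1) (stp s e) := by
  obtain ⟨hW, hD, hA⟩ := h
  refine ⟨stp_W_nonneg s hW e, ?_⟩
  by_cases he : Inside s.A e
  · have hne : ∀ a b, e = s(a, b) → a ≠ b := by
      rintro a b rfl
      exact (G.mem_edgeSet.1 heG).ne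
    constructor
    · intro v hv
      simp only [stp, if_pos he] at hv ⊢
      by_cases hve : v ∈ e
      · rw [if_pos hve]
        obtain ⟨z, rfl⟩ := hve
        rw [sum_mem_pair (hne _ _ rfl)]
        exact matched_dead (hA v (he v (by simp))) (hA z (he z (by simp))) heG hek hinj
      · rw [if_neg hve]
        apply (hD v _).mono le_rfl
        simp only [rm, Finset.mem_filter, not_and, not_not] at hv
        exact fun h => hve (hv h)
    · intro x hx
      simp only [stp, if_pos he] at hx ⊢
      obtain ⟨hxA, hxe⟩ := Finset.mem_filter.1 hx
      rw [if_neg hxe]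
      exact (hA x hxA).mono le_rfl (Finset.filter_subset _ _) hxe hinj
  · constructor
    · intro v hv
      simp only [stp, if_neg he] at hv ⊢
      apply (hD v hv).mono
      simp [hv]
    · intro x hx
      simp only [stp, if_neg he] at hx ⊢
      by_cases hxe : x ∈ e
      · simp only [hxe, hx, and_self, if_true]
        obtain ⟨y, rfl⟩ := hxe
        have hyA : y ∉ s.A := by
          intro hy
          apply he
          intro z hz
          rcases Sym2.mem_iff.1 hz with rfl | rfl <;> assumption
        have hWy : s.W y ≤ ∑ z, (if z ∈ s(x, y) ∧ z ∉ s.A then s.W z else 0) := by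
          have := Finset.single_le_sum
            (f := fun z => if z ∈ s(x, y) ∧ z ∉ s.A then s.W z else 0)
            (fun z _ => by split_ifs; exacts [hW z, le_rfl]) (Finset.mem_univ y)
          simpa [hyA] using this
        obtain ⟨⟨z, hz1, hz2, hz3⟩, ry, hry, hry'⟩ := hD y hyA
        obtain ⟨rx, hrx, hx'⟩ := hA x hx
        refine ⟨max rx ry, ?_, ?_⟩
        · have h1 : (0:ℝ) < (9 / 8) ^ rx := by positivity
          have h2 : (0:ℝ) < (9 / 8) ^ ry := by positivity
          rcases le_total rx ry with h | h
          · rw [max_eq_right h]; linarith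
          · rw [max_eq_left h]; linarith
        · intro y' hy' hk
          by_cases hk' : π s(x, y') = k + 1
          · have := hinj _ hy' hk'
            obtain rfl : y' = y := Sym2.congr_right.1 this
            exact ⟨hyA, fun h => hry (residual_antitone G π (le_max_right _ _) h),
              z, hz1, by omega, hz3⟩
          · obtain ⟨h3, h4, h5⟩ := hx' y' hy' (by omega)
            exact ⟨h3, fun h => h4 (residual_antitone G π (le_max_left _ _) h), h5⟩
      · simp only [hxe, false_and, if_false, add_zero]
        exact (hA x hx).mono le_rfl (Finset.Subset.refl _) hxe hinj

lemma cv_nonneg (A : Finset V) (R : Finset (Sym2 V)) (w : V) : 0 ≤ cv A R w := by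
  unfold cv
  split_ifs
  · exact gv_nonneg A R w
  · linarith [hv_nonneg A R w]

/-- Once all edges are processed, an edge surviving `ρ - 1` parallel rounds has a dead endpoint of
weight at least `(9/8) ^ (ρ - 1)`. -/
lemma Inv.rho_le {G : SimpleGraph V} {π : Sym2 V → ℕ} {k : ℕ} {s : St V} (h : Inv G π k s)
    (hall : ∀ e ∈ G.edgeSet, π e ≤ k) (hrho : 0 < rho G π) :
    1 / 8 * (9 / 8 : ℝ) ^ (rho G π - 1) ≤ pot s := by
  obtain ⟨hW, hD, hA⟩ := h
  have hedge : hasEdgeIn G (residual G π (rho G π - 1)) := by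
    have := Nat.notMem_of_lt_sInf (s := {t | ¬ hasEdgeIn G (residual G π t)})
      (m := rho G π - 1) (by change _ < rho G π; omega)
    simpa using this
  obtain ⟨e, heG, hin⟩ := hedge
  have hdead : ∃ y ∈ e, y ∉ s.A := by
    induction e using Sym2.ind with
    | _ x y =>
      by_cases hx : x ∈ s.A
      · obtain ⟨r, -, h⟩ := hA x hx
        exact ⟨y, by simp, (h y heG (hall _ heG)).1⟩
      · exact ⟨x, by simp, hx⟩
  obtain ⟨y, hye, hyA⟩ := hdead
  obtain ⟨-, r, hr, hr'⟩ := hD y hyA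
  have hlt : rho G π - 1 ≤ r := by
    by_contra hcon
    exact hr (residual_antitone G π (by omega) (hin y hye))
  have h1 : (9 / 8 : ℝ) ^ (rho G π - 1) ≤ (9 / 8) ^ r := pow_le_pow_right₀ (by norm_num) hlt
  have h2 : s.W y * cv s.A s.R y ≤ pot s :=
    Finset.single_le_sum (f := fun w => s.W w * cv s.A s.R w)
      (fun w _ => mul_nonneg (hW w) (cv_nonneg _ _ _)) (Finset.mem_univ y)
  have h3 : 1 / 8 ≤ cv s.A s.R y := by
    rw [cv, if_neg hyA]; exact hv_nonneg _ _ _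
  have h4 : s.W y * (1 / 8) ≤ s.W y * cv s.A s.R y := by
    gcongr
    exact hW y
  linarith

/-! ### The process on a graph and the final estimate -/

/-- The initial state: all vertices alive with weight one, all edges unprocessed. -/
def initSt (G : SimpleGraph V) [DecidableRel G.Adj] : St V where
  A := Finset.univ
  R := G.edgeFinset
  W := fun _ => 1

/-- The state after the first `k` edges in the order `τ` are processed. -/
def greedy (G : SimpleGraph V) [DecidableRel G.Adj]
    (τ : Fin G.edgeFinset.card → {e // e ∈ G.edgeFinset})
    (k : ℕ) : St V := run (fun s e => stp s e.1) (initSt G) τ k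

lemma greedy_W_nonneg (G : SimpleGraph V) [DecidableRel G.Adj]
    (τ : Fin G.edgeFinset.card → {e // e ∈ G.edgeFinset}) (k : ℕ) (w : V) :
    0 ≤ (greedy G τ k).W w := by
  induction k generalizing w with
  | zero => simp [greedy, run, initSt]
  | succ k ih =>
    simp only [greedy, run]
    split_ifs
    · exact stp_W_nonneg _ ih _ w
    · exact ih w

lemma greedy_R (G : SimpleGraph V) [DecidableRel G.Adj]
    (τ : Fin G.edgeFinset.card ≃ {e // e ∈ G.edgeFinset}) (k : ℕ) (hk : k ≤ G.edgeFinset.card) :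
    (greedy G τ k).R
      = (Finset.univ.filter (fun j : Fin G.edgeFinset.card => k ≤ j.1)).image (fun j => (τ j).1) := by
  induction k with
  | zero =>
    ext e
    simp only [greedy, run, initSt, Finset.mem_image, Finset.mem_filter, Finset.mem_univ, true_and,
      Nat.zero_le]
    exact ⟨fun h => ⟨τ.symm ⟨e, h⟩, by simp⟩, by rintro ⟨j, rfl⟩; exact (τ j).2⟩
  | succ k ih =>
    have hk' : k < G.edgeFinset.card := hk
    have h1 : (greedy G τ (k + 1)).R = (greedy G τ k).R.erase (τ ⟨k, hk'⟩).1 := by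
      simp only [greedy, run, dif_pos hk', stp]
    rw [h1, ih hk'.le]
    ext e
    simp only [Finset.mem_erase, Finset.mem_image, Finset.mem_filter, Finset.mem_univ, true_and]
    constructor
    · rintro ⟨hne, j, hj, rfl⟩
      refine ⟨j, ?_, rfl⟩
      have : j.1 ≠ k := by
        rintro rfl
        exact hne rfl
      omega
    · rintro ⟨j, hj, rfl⟩
      refine ⟨?_, j, by omega, rfl⟩
      intro h
      have := τ.injective (Subtype.ext h)
      rw [this] at hj
      simp at hj

lemma greedy_avg (G : SimpleGraph V) [DecidableRel G.Adj] :
    ∑ τ : Fin G.edgeFinset.card ≃ {e // e ∈ G.edgeFinset}, pot (greedy G τ G.edgeFinset.card)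
      ≤ (G.edgeFinset.card.factorial : ℝ) * pot (initSt G) := by
  have h := run_avg (m := G.edgeFinset.card) (fun (s : St V) (e : {e // e ∈ G.edgeFinset}) => stp s e.1)
    (initSt G) pot ?_ G.edgeFinset.card le_rfl
  · refine h.trans (le_of_eq ?_)
    rw [Finset.sum_const, Finset.card_univ, Fintype.card_equiv (Finset.equivFin _).symm]
    simp
  · intro τ k hk
    have hR := greedy_R G τ k hk.le
    have hinj : Function.Injective (fun j => (τ j).1) :=
      fun a b h => τ.injective (Subtype.ext h)
    have hcard : (greedy G τ k).R.card = G.edgeFinset.card - k := by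
      rw [hR, Finset.card_image_of_injective _ hinj]
      have : Finset.univ.filter (fun j : Fin G.edgeFinset.card => k ≤ j.1) = Finset.Ici ⟨k, hk⟩ := by
        ext j; simp [Fin.le_def]
      rw [this, Fin.card_Ici]
    have hd := pot_drift (greedy G τ k) ?_ (greedy_W_nonneg G τ k)
    · rw [hcard] at hd
      rw [hR, Finset.sum_image fun a _ b _ h => hinj h] at hd
      exact hd
    · intro e he
      rw [hR] at he
      obtain ⟨j, -, rfl⟩ := Finset.mem_image.1 he
      exact G.not_isDiag_of_mem_edgeSet (SimpleGraph.mem_edgeFinset.1 (τ j).2)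

lemma greedy_Inv (G : SimpleGraph V) [DecidableRel G.Adj] (σ : EdgePerm G) (k : ℕ)
    (hk : k ≤ G.edgeFinset.card) : Inv G (rank G σ) k (greedy G σ.symm k) := by
  induction k with
  | zero =>
    refine ⟨greedy_W_nonneg G _ 0, ?_, ?_⟩
    · intro v hv; simp [greedy, run, initSt] at hv
    · intro x _
      refine ⟨0, by simp [greedy, run, initSt], ?_⟩
      intro y hy h0
      simp [rank, SimpleGraph.mem_edgeFinset.2 hy] at h0
  | succ k ih =>
    have hk' : k < G.edgeFinset.card := hk
    have h1 : greedy G σ.symm (k + 1) = stp (greedy G σ.symm k) (σ.symm ⟨k, hk'⟩).1 := by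
      simp only [greedy, run, dif_pos hk']
    rw [h1]
    refine (ih hk'.le).step (SimpleGraph.mem_edgeFinset.1 (σ.symm ⟨k, hk'⟩).2) ?_ ?_
    · simp only [rank, dif_pos (σ.symm ⟨k, hk'⟩).2, Subtype.coe_eta, Equiv.apply_symm_apply]
    · intro f hf hfk
      have hf' := SimpleGraph.mem_edgeFinset.2 hf
      simp only [rank, dif_pos hf', Nat.add_right_cancel_iff] at hfk
      have : σ ⟨f, hf'⟩ = ⟨k, hk'⟩ := Fin.ext hfk
      rw [← this, Equiv.symm_apply_apply]

lemma pot_init_le (G : SimpleGraph V) [DecidableRel G.Adj] :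
    pot (initSt G) ≤ 2 * (Fintype.card V : ℝ) ^ 3 := by
  set n : ℝ := (Fintype.card V : ℝ) with hn
  have hc : ∀ x, ((nb Finset.univ G.edgeFinset x).card : ℝ) ≤ n := by
    intro x; rw [hn]; exact_mod_cast Finset.card_le_univ _
  have hs : ∀ x, sq Finset.univ G.edgeFinset x ≤ n := by
    intro x
    refine le_trans ?_ (hc x)
    rw [sq, Real.sqrt_le_left (by positivity)]
    exact_mod_cast Nat.le_self_pow (by norm_num) _
  have hn0 : 0 ≤ n := by positivity
  have hg : ∀ x, gv Finset.univ G.edgeFinset x ≤ 2 * n ^ 2 := by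
    intro x
    have h1 : ∑ v ∈ nb Finset.univ G.edgeFinset x, sq Finset.univ G.edgeFinset v ≤ n * n := by
      calc _ ≤ ∑ v ∈ nb Finset.univ G.edgeFinset x, n := Finset.sum_le_sum fun v _ => hs v
        _ = (nb Finset.univ G.edgeFinset x).card * n := by rw [Finset.sum_const, nsmul_eq_mul]
        _ ≤ _ := by gcongr; exact hc x
    have h2 : ((nb Finset.univ G.edgeFinset x).card : ℝ) * sq Finset.univ G.edgeFinset x ≤ n * n :=
      mul_le_mul (hc x) (hs x) (sq_nonneg' _ _ _) hn0
    unfold gv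
    nlinarith
  calc pot (initSt G) = ∑ x, gv Finset.univ G.edgeFinset x := by
        simp [pot, initSt, cv]
    _ ≤ ∑ _x : V, 2 * n ^ 2 := Finset.sum_le_sum fun x _ => hg x
    _ = _ := by rw [Finset.sum_const, nsmul_eq_mul, Finset.card_univ, ← hn]; ring

/-- The constant `90` comes from `log (9/8) ≥ 1/9`: more than `90 log n` rounds give
`(9/8) ^ r ≥ n ^ 10`. -/
lemma pot_large {n : ℕ} (hn : 2 ≤ n) {r : ℕ} (hr : 90 * Real.log n < r) :
    0 < r ∧ 2 * (n : ℝ) ^ 5 ≤ 1 / 8 * (9 / 8 : ℝ) ^ (r - 1) := by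
  have hn' : (2:ℝ) ≤ n := by exact_mod_cast hn
  have hlog : 0 ≤ Real.log n := Real.log_nonneg (by linarith)
  have hr0 : 0 < r := by
    have : (0:ℝ) < r := by linarith
    exact_mod_cast this
  refine ⟨hr0, ?_⟩
  have h1 : (1 / 9 : ℝ) ≤ Real.log (9 / 8) := by
    have := Real.one_sub_inv_le_log_of_pos (x := 9 / 8) (by norm_num)
    norm_num at this ⊢; linarith
  have h2 : (n : ℝ) ^ 10 ≤ (9 / 8 : ℝ) ^ r := by
    rw [← Real.log_le_log_iff (by positivity) (by positivity), Real.log_pow, Real.log_pow]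
    push_cast
    nlinarith
  have h3 : (9 / 8 : ℝ) ^ r = (9 / 8) ^ (r - 1) * (9 / 8) := by
    rw [← pow_succ]; congr 1; omega
  have h4 : (32 : ℝ) ≤ (n : ℝ) ^ 5 := by
    calc (32 : ℝ) = 2 ^ 5 := by norm_num
      _ ≤ _ := by gcongr
  nlinarith

/-- **Statement 9.** There is an absolute constant `c ≥ 1` such that for every finite
simple graph with `n ≥ 2` vertices and `m ≥ 1` edges, the number of permutations `π ∈ Π`
with parallel round complexity `ρ(G, π) > c · log n` is at most `m!/n²`; equivalently, a
uniformly random `π` satisfies `ρ(G, π) ≤ c · log n` with probability at least `1 − n⁻²`. -/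
theorem statement_9 :
    ∃ c : ℝ, 1 ≤ c ∧
      ∀ (V : Type) [Fintype V] [DecidableEq V] (G : SimpleGraph V) [DecidableRel G.Adj],
        2 ≤ Fintype.card V → 1 ≤ G.edgeFinset.card →
        (Set.ncard {σ : EdgePerm G |
            c * Real.log (Fintype.card V) < (rho G (rank G σ) : ℝ)} : ℝ) ≤
          (Nat.factorial G.edgeFinset.card : ℝ) / (Fintype.card V : ℝ) ^ 2 := by
  refine ⟨90, by norm_num, ?_⟩
  intro V _ _ G _ hn _
  set m := G.edgeFinset.card with hm
  set n : ℝ := (Fintype.card V : ℝ) with hn'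
  set B : Set (EdgePerm G) := {σ : EdgePerm G | 90 * Real.log n < (rho G (rank G σ) : ℝ)} with hB
  have hnpos : 0 < n := by
    have : 0 < Fintype.card V := by omega
    rw [hn']; exact_mod_cast this
  have hpot0 : ∀ σ : EdgePerm G, 0 ≤ pot (greedy G σ.symm m) := fun σ =>
    Finset.sum_nonneg fun w _ => mul_nonneg (greedy_W_nonneg G _ _ w) (cv_nonneg _ _ _)
  have hbad : ∀ σ ∈ B, 2 * n ^ 5 ≤ pot (greedy G σ.symm m) := by
    intro σ hσ
    obtain ⟨h0, h1⟩ := pot_large hn hσ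
    refine h1.trans ((greedy_Inv G σ m le_rfl).rho_le ?_ h0)
    intro e he
    simp only [rank, dif_pos (SimpleGraph.mem_edgeFinset.2 he)]
    exact (σ _).2
  have hsum : ∑ σ : EdgePerm G, pot (greedy G σ.symm m) ≤ (m.factorial : ℝ) * (2 * n ^ 3) := by
    have e : ∑ σ : EdgePerm G, pot (greedy G σ.symm m)
        = ∑ τ : Fin m ≃ {e // e ∈ G.edgeFinset}, pot (greedy G τ m) :=
      Equiv.sum_comp (⟨Equiv.symm, Equiv.symm, fun _ => rfl, fun _ => rfl⟩ :
        EdgePerm G ≃ (Fin m ≃ {e // e ∈ G.edgeFinset})) (fun τ => pot (greedy G τ m))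
    rw [e]
    refine (greedy_avg G).trans ?_
    gcongr
    exact pot_init_le G
  have hmarkov : (B.ncard : ℝ) * (2 * n ^ 5) ≤ ∑ σ : EdgePerm G, pot (greedy G σ.symm m) := by
    classical
    rw [Set.ncard_eq_toFinset_card']
    calc (B.toFinset.card : ℝ) * (2 * n ^ 5) = ∑ σ ∈ B.toFinset, 2 * n ^ 5 := by
          rw [Finset.sum_const, nsmul_eq_mul]
      _ ≤ ∑ σ ∈ B.toFinset, pot (greedy G σ.symm m) :=
          Finset.sum_le_sum fun σ hσ => hbad σ (by simpa using hσ)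
      _ ≤ _ := Finset.sum_le_sum_of_subset_of_nonneg (Finset.subset_univ _)
          fun σ _ _ => hpot0 σ
  rw [le_div_iff₀ (by positivity)]
  have h := hmarkov.trans hsum
  have h3 : 0 < 2 * n ^ 3 := by positivity
  refine le_of_mul_le_mul_right ?_ h3
  calc _ = (B.ncard : ℝ) * (2 * n ^ 5) := by ring
    _ ≤ _ := h

end

end RGMM
end

section
/- Let G = (V, E) be a finite simple graph with n ≥ 2 vertices, m ≥ 1 edges, maximum degree Δ, and average degree d̄ = 2m/n, and let 0 < ε ≤ 1. Let k be a positive integer with k ≥ 3072 · Δ · ln n / (ε² · d̄). Draw ((v₁, π₁), …, (v_k, π_k)) uniformly at random from (V × Π)^k, let X = #{ i ∈ [k] : v_i is matched in GMM(G, π_i) }, and let f = X/k. Then with probability at least 1 − 2n⁻⁴, both (1 − ε) · μ(G)/2 ≤ (1 − ε/2) · f·n/2 ≤ μ(G) and ν(G) ≤ (1 + ε/2) · f·n ≤ (1 + ε) · 2·ν(G). -/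
/-!
Every greedy matching `M` is maximal, so its matched vertices form a vertex cover of size at most
`2 |M|`. Together with weak duality `μ ≤ ν`, the number of matched vertices lies in `[ν, 2μ]` for
*every* permutation (`vcNum_le_card_matched`, `card_matched_le`, `matchNum_le_vcNum`). Averaging
over permutations, the probability `p` that a random vertex is matched under a random permutation
satisfies `ν ≤ p n ≤ 2μ`. As each vertex of a cover covers at most `Δ` edges, `m ≤ Δ ν`, and
therefore `k p ≥ 1536 ln n / ε²`.

It remains to see that `X` lies in `(1 ± ε/4) k p` with probability at least `1 - 2 n⁻⁴`. This is a
Chernoff bound, proved by counting (`chernoff_count`): the exponential moment of `X` factors over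
the `k` samples, and Markov's inequality with parameters `t = ± ε/8` gives failure probability at
most `exp (- t² k p) ≤ n⁻²⁴` on each side. The four inequalities then follow from
`X n / k ∈ (1 ± ε/4) p n`.
-/


namespace RGMM

noncomputable section

variable {V : Type} [Fintype V] [DecidableEq V]

/-- `M` is a matching of `G` (a set of pairwise non-adjacent edges of `G`). -/
def IsMatchingFinset (G : SimpleGraph V) (M : Finset (Sym2 V)) : Prop :=
  (∀ e ∈ M, e ∈ G.edgeSet) ∧ ∀ e ∈ M, ∀ f ∈ M, e ≠ f → ¬ Share e f

/-- `μ(G)`: the maximum size of a matching of `G`. -/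
def matchNum (G : SimpleGraph V) : ℕ :=
  sSup {k | ∃ M : Finset (Sym2 V), IsMatchingFinset G M ∧ M.card = k}

/-- `C` is a vertex cover of `G`. -/
def IsVertexCover (G : SimpleGraph V) (C : Finset V) : Prop :=
  ∀ e ∈ G.edgeSet, ∃ x ∈ C, x ∈ e

/-- `ν(G)`: the minimum size of a vertex cover of `G`. -/
def vcNum (G : SimpleGraph V) : ℕ :=
  sInf {k | ∃ C : Finset V, IsVertexCover G C ∧ C.card = k}

/-- `v` is matched in `GMM(G, π)`. -/
def matchedIn (G : SimpleGraph V) (π : Sym2 V → ℕ) (v : V) : Prop :=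
  ∃ e, inGMM G π e ∧ v ∈ e

/-! ### Deterministic bounds on the set of matched vertices -/

open Classical in
/-- The set of vertices matched in `GMM(G, π)`. -/
def matchedSet (G : SimpleGraph V) (π : Sym2 V → ℕ) : Finset V :=
  Finset.univ.filter (matchedIn G π)

lemma inGMM_iff (G : SimpleGraph V) (π : Sym2 V → ℕ) (e : Sym2 V) :
    inGMM G π e ↔ e ∈ G.edgeSet ∧
      ∀ f, f ∈ G.edgeSet → Share e f → π f < π e → ¬ inGMM G π f := by
  rw [inGMM]

lemma rank_injOn (G : SimpleGraph V) [DecidableRel G.Adj] (σ : EdgePerm G) :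
    Set.InjOn (rank G σ) G.edgeSet := by
  intro e he f hf h
  have he' : e ∈ G.edgeFinset := by simpa using he
  have hf' : f ∈ G.edgeFinset := by simpa using hf
  simp only [rank, dif_pos he', dif_pos hf'] at h
  have h2 : σ ⟨e, he'⟩ = σ ⟨f, hf'⟩ := Fin.ext (by omega)
  simpa using σ.injective h2

/-- The greedy matching is maximal, so the vertices it matches cover every edge. -/
lemma isVertexCover_matchedSet (G : SimpleGraph V) (π : Sym2 V → ℕ) :
    IsVertexCover G (matchedSet G π) := by
  classical
  intro e he
  by_cases h : inGMM G π e
  · induction e with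
    | _ x y => exact ⟨x, by simpa [matchedSet] using ⟨_, h, by simp⟩, by simp⟩
  · have h' := h
    rw [inGMM_iff] at h'
    push Not at h'
    obtain ⟨f, hf, ⟨x, hxe, hxf⟩, hlt, hin⟩ := h' he
    exact ⟨x, by simpa [matchedSet] using ⟨f, hin, hxf⟩, hxe⟩

lemma vcNum_le_card {G : SimpleGraph V} {C : Finset V} (hC : IsVertexCover G C) :
    vcNum G ≤ C.card :=
  Nat.sInf_le ⟨C, hC, rfl⟩

lemma exists_min_cover (G : SimpleGraph V) :
    ∃ C : Finset V, IsVertexCover G C ∧ C.card = vcNum G := by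
  have : {k | ∃ C : Finset V, IsVertexCover G C ∧ C.card = k}.Nonempty :=
    ⟨_, _, isVertexCover_matchedSet G (fun _ => 0), rfl⟩
  exact Nat.sInf_mem this

/-- Weak duality: distinct edges of a matching are covered by distinct vertices. -/
lemma matching_card_le_cover {G : SimpleGraph V} {M : Finset (Sym2 V)} {C : Finset V}
    (hM : IsMatchingFinset G M) (hC : IsVertexCover G C) : M.card ≤ C.card := by
  classical
  refine Finset.card_le_card_of_forall_subsingleton (fun e x => x ∈ e)
    (fun e he => hC e (hM.1 e he)) ?_
  rintro x - e ⟨he, hxe⟩ f ⟨hf, hxf⟩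
  by_contra hne
  exact hM.2 e he f hf hne ⟨x, hxe, hxf⟩

lemma bddAbove_matching (G : SimpleGraph V) :
    BddAbove {k | ∃ M : Finset (Sym2 V), IsMatchingFinset G M ∧ M.card = k} := by
  refine ⟨vcNum G, ?_⟩
  rintro _ ⟨M, hM, rfl⟩
  obtain ⟨C, hC, hc⟩ := exists_min_cover G
  exact hc ▸ matching_card_le_cover hM hC

lemma matchNum_le_vcNum (G : SimpleGraph V) : matchNum G ≤ vcNum G := by
  refine csSup_le' ?_
  rintro _ ⟨M, hM, rfl⟩
  obtain ⟨C, hC, hc⟩ := exists_min_cover G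
  exact hc ▸ matching_card_le_cover hM hC

lemma vcNum_le_card_matched (G : SimpleGraph V) (π : Sym2 V → ℕ) :
    vcNum G ≤ (matchedSet G π).card :=
  vcNum_le_card (isVertexCover_matchedSet G π)

lemma card_matched_le (G : SimpleGraph V) (π : Sym2 V → ℕ) (hπ : Set.InjOn π G.edgeSet) :
    (matchedSet G π).card ≤ 2 * matchNum G := by
  classical
  let M : Finset (Sym2 V) := Finset.univ.filter (inGMM G π)
  have hM : IsMatchingFinset G M := by
    refine ⟨fun e he => ?_, fun e he f hf hne hs => ?_⟩
    · have : inGMM G π e := by simpa [M] using he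
      exact ((inGMM_iff G π e).1 this).1
    · have he' : inGMM G π e := by simpa [M] using he
      have hf' : inGMM G π f := by simpa [M] using hf
      have h1 := (inGMM_iff G π e).1 he'
      have h2 := (inGMM_iff G π f).1 hf'
      have hs' : Share f e := hs.imp fun x hx => hx.symm
      rcases lt_trichotomy (π e) (π f) with h | h | h
      · exact h2.2 e h1.1 hs' h he'
      · exact hne (hπ h1.1 h2.1 h)
      · exact h1.2 f h2.1 hs h hf'
  have hcard : M.card ≤ matchNum G := le_csSup (bddAbove_matching G) ⟨M, hM, rfl⟩
  have hsub : matchedSet G π ⊆ M.biUnion Sym2.toFinset := by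
    intro v hv
    obtain ⟨e, he, hve⟩ : matchedIn G π v := by simpa [matchedSet] using hv
    simp only [Finset.mem_biUnion, Sym2.mem_toFinset]
    exact ⟨e, by simpa [M] using he, hve⟩
  have h2 : (M.biUnion Sym2.toFinset).card ≤ M.card * 2 := by
    refine Finset.card_biUnion_le_card_mul _ _ _ fun e _ => ?_
    rw [Sym2.card_toFinset]
    split_ifs <;> omega
  have := Finset.card_le_card hsub
  omega

lemma card_edges_le (G : SimpleGraph V) [DecidableRel G.Adj] :
    G.edgeFinset.card ≤ vcNum G * G.maxDegree := by
  obtain ⟨C, hC, hc⟩ := exists_min_cover G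
  have hsub : G.edgeFinset ⊆ C.biUnion (fun v => G.incidenceFinset v) := by
    intro e he
    have he' : e ∈ G.edgeSet := by simpa using he
    obtain ⟨x, hx, hxe⟩ := hC e he'
    simp only [Finset.mem_biUnion, SimpleGraph.mem_incidenceFinset]
    exact ⟨x, hx, he', hxe⟩
  refine (Finset.card_le_card hsub).trans (hc ▸ Finset.card_biUnion_le_card_mul _ _ _ ?_)
  intro v _
  rw [SimpleGraph.card_incidenceFinset_eq_degree]
  exact G.degree_le_maxDegree v

/-! ### A Chernoff bound by counting -/

/-- Chernoff bound for the number `X` of `k` uniform samples from `Ω` that hit `A`, where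
`p = |A| / |Ω|`. The sign of `t` selects the tail: the event is `X ≥ (1 + 2t) k p` for `t > 0`
and `X ≤ (1 + 2t) k p` for `t < 0`. -/
lemma chernoff_count {Ω : Type} [Fintype Ω] [Nonempty Ω] (A : Ω → Prop) [DecidablePred A]
    (k : ℕ) (p t : ℝ) (ht : |t| ≤ 1)
    (hp : p * Fintype.card Ω = ((Finset.univ.filter A).card : ℝ))
    (B : Finset (Fin k → Ω))
    (hB : ∀ ω ∈ B, t * (k * p) + 2 * t ^ 2 * (k * p) ≤
      t * ((Finset.univ.filter fun i => A (ω i)).card : ℝ)) :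
    (B.card : ℝ) ≤ Real.exp (-(t ^ 2 * (k * p))) * (Fintype.card Ω : ℝ) ^ k := by
  classical
  have hN : (0 : ℝ) < Fintype.card Ω := by exact_mod_cast Fintype.card_pos
  have hp0 : 0 ≤ p := by
    have : 0 ≤ p * Fintype.card Ω := by rw [hp]; positivity
    exact nonneg_of_mul_nonneg_left this hN
  -- The exponential moment of a single sample.
  have h1 : ∑ x : Ω, Real.exp (if A x then t else 0) ≤
      Fintype.card Ω * Real.exp (p * (t + t ^ 2)) := by
    have e1 : ∑ x : Ω, Real.exp (if A x then t else 0) =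
        Fintype.card Ω + p * Fintype.card Ω * (Real.exp t - 1) := by
      have : ∀ x : Ω, Real.exp (if A x then t else 0) =
          1 + if A x then (Real.exp t - 1) else 0 := by
        intro x; split_ifs <;> simp
      simp_rw [this, Finset.sum_add_distrib, ← Finset.sum_filter]
      simp [hp, mul_sub]
    have e2 : Real.exp t - 1 ≤ t + t ^ 2 := by
      have := (abs_le.1 (Real.abs_exp_sub_one_sub_id_le ht)).2
      linarith
    have e3 := Real.add_one_le_exp (p * (t + t ^ 2))
    have e4 := mul_le_mul_of_nonneg_left e2 hp0
    rw [e1]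
    nlinarith
  -- Independence: the exponential moment of `X` is the `k`-th power.
  have h2 : ∑ ω : Fin k → Ω,
      Real.exp (t * ((Finset.univ.filter fun i => A (ω i)).card : ℝ)) =
      (∑ x : Ω, Real.exp (if A x then t else 0)) ^ k := by
    rw [Fintype.sum_pow]
    refine Finset.sum_congr rfl fun ω _ => ?_
    rw [← Real.exp_sum, ← Finset.sum_filter]
    simp [mul_comm]
  have h3 : (B.card : ℝ) * Real.exp (t * (k * p) + 2 * t ^ 2 * (k * p)) ≤
      (Fintype.card Ω * Real.exp (p * (t + t ^ 2))) ^ k := by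
    calc (B.card : ℝ) * Real.exp (t * (k * p) + 2 * t ^ 2 * (k * p))
        = ∑ ω ∈ B, Real.exp (t * (k * p) + 2 * t ^ 2 * (k * p)) := by simp
      _ ≤ ∑ ω ∈ B, Real.exp (t * ((Finset.univ.filter fun i => A (ω i)).card : ℝ)) :=
          Finset.sum_le_sum fun ω hω => Real.exp_le_exp.2 (hB ω hω)
      _ ≤ ∑ ω : Fin k → Ω, Real.exp (t * ((Finset.univ.filter fun i => A (ω i)).card : ℝ)) :=
          Finset.sum_le_sum_of_subset_of_nonneg (Finset.subset_univ _)
            fun _ _ _ => (Real.exp_pos _).le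
      _ ≤ _ := by
          rw [h2]
          exact pow_le_pow_left₀ (Finset.sum_nonneg fun _ _ => (Real.exp_pos _).le) h1 k
  rw [mul_pow, ← Real.exp_nat_mul] at h3
  rw [← mul_le_mul_iff_left₀ (Real.exp_pos (t * (k * p) + 2 * t ^ 2 * (k * p)))]
  refine h3.trans_eq ?_
  rw [mul_right_comm, ← Real.exp_add, mul_comm]
  congr 2
  ring

/-! ### The fraction of matched pairs and the conclusion -/

open Classical in
lemma card_matched_pairs (G : SimpleGraph V) [DecidableRel G.Adj] :
    (Finset.univ.filter
      fun x : V × EdgePerm G => matchedIn G (rank G x.2) x.1).card =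
      ∑ σ : EdgePerm G, (matchedSet G (rank G σ)).card := by
  simp only [Finset.card_filter, matchedSet]
  rw [Fintype.sum_prod_type, Finset.sum_comm]

/-- If `Y = f n` is within a factor `1 ± ε/4` of `q = p n` and `ν ≤ q ≤ 2μ`, `μ ≤ ν`, then all four
estimates hold. -/
lemma estimates {ε q Y μ ν : ℝ} (hε0 : 0 < ε) (hε1 : ε ≤ 1) (hμ0 : 0 ≤ μ) (hμν : μ ≤ ν)
    (hνq : ν ≤ q) (hqμ : q ≤ 2 * μ) (hl : (1 - ε / 4) * q ≤ Y) (hu : Y ≤ (1 + ε / 4) * q) :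
    ((1 - ε) * μ / 2 ≤ (1 - ε / 2) * Y / 2 ∧ (1 - ε / 2) * Y / 2 ≤ μ) ∧
      (ν ≤ (1 + ε / 2) * Y ∧ (1 + ε / 2) * Y ≤ (1 + ε) * 2 * ν) := by
  have hq : 0 ≤ q := by linarith
  have a1 := mul_le_mul_of_nonneg_left hl (by linarith : 0 ≤ 1 - ε / 2)
  have a2 := mul_le_mul_of_nonneg_left hu (by linarith : 0 ≤ 1 - ε / 2)
  have a3 := mul_le_mul_of_nonneg_left hl (by linarith : 0 ≤ 1 + ε / 2)
  have a4 := mul_le_mul_of_nonneg_left hu (by linarith : 0 ≤ 1 + ε / 2)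
  have b0 : 0 ≤ ε * q := by positivity
  have b1 : 0 ≤ ε ^ 2 * q := by positivity
  have b2 : ε ^ 2 * q ≤ ε * q := by nlinarith
  refine ⟨⟨?_, ?_⟩, ?_, ?_⟩
  · have : (1 - ε) * μ ≤ (1 - ε) * q :=
      mul_le_mul_of_nonneg_left (by linarith) (by linarith)
    nlinarith
  · nlinarith
  · nlinarith
  · have : (1 + ε) * q ≤ (1 + ε) * (2 * ν) :=
      mul_le_mul_of_nonneg_left (by linarith) (by linarith)
    nlinarith

/-- Failure of both tail events of `chernoff_count` with `t = ± ε/8`, rescaled by `n / k`. -/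
lemma rescale {ε κ n p x : ℝ} (hε0 : 0 < ε) (hκ : 0 < κ) (hn : 0 < n)
    (h1 : ε / 8 * x < ε / 8 * (κ * p) + 2 * (ε / 8) ^ 2 * (κ * p))
    (h2 : -(ε / 8) * x < -(ε / 8) * (κ * p) + 2 * (-(ε / 8)) ^ 2 * (κ * p)) :
    (1 - ε / 4) * (p * n) ≤ x / κ * n ∧ x / κ * n ≤ (1 + ε / 4) * (p * n) := by
  have hu : x ≤ (1 + ε / 4) * p * κ := by
    refine le_of_mul_le_mul_left (a := ε / 8) ?_ (by positivity)
    linarith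
  have hl : (1 - ε / 4) * p * κ ≤ x := by
    refine le_of_mul_le_mul_left (a := ε / 8) ?_ (by positivity)
    linarith
  rw [← mul_assoc, ← mul_assoc]
  exact ⟨mul_le_mul_of_nonneg_right ((le_div_iff₀ hκ).2 hl) hn.le,
    mul_le_mul_of_nonneg_right ((div_le_iff₀ hκ).2 hu) hn.le⟩

/-- **Statement 12.** Let `G` have `n ≥ 2` vertices, `m ≥ 1` edges, maximum degree `Δ`
and average degree `d̄ = 2m/n`, let `0 < ε ≤ 1` and let `k ≥ 3072·Δ·ln n/(ε²·d̄)`.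
Sampling `((v₁, π₁), …, (v_k, π_k))` uniformly from `(V × Π)^k`, with `X` the number of
indices `i` with `v_i` matched in `GMM(G, π_i)` and `f = X/k`, with probability at least
`1 − 2n⁻⁴` both `(1 − ε)·μ(G)/2 ≤ (1 − ε/2)·f·n/2 ≤ μ(G)` and
`ν(G) ≤ (1 + ε/2)·f·n ≤ (1 + ε)·2·ν(G)`. -/
theorem statement_12 {V : Type} [Fintype V] [DecidableEq V] (G : SimpleGraph V)
    [DecidableRel G.Adj] (hn : 2 ≤ Fintype.card V) (hm : 1 ≤ G.edgeFinset.card)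
    (ε : ℝ) (hε0 : 0 < ε) (hε1 : ε ≤ 1) (k : ℕ) (hk0 : 0 < k)
    (hk : 3072 * (G.maxDegree : ℝ) * Real.log (Fintype.card V) /
        (ε ^ 2 * (2 * (G.edgeFinset.card : ℝ) / (Fintype.card V : ℝ))) ≤ (k : ℝ)) :
    (1 - 2 / (Fintype.card V : ℝ) ^ 4) *
        (Fintype.card (Fin k → V × EdgePerm G) : ℝ) ≤
      (Set.ncard {ω : Fin k → V × EdgePerm G |
        let f : ℝ :=
          (Nat.card {i : Fin k | matchedIn G (rank G (ω i).2) (ω i).1} : ℝ) / (k : ℝ)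
        ((1 - ε) * (matchNum G : ℝ) / 2 ≤ (1 - ε / 2) * f * (Fintype.card V : ℝ) / 2 ∧
          (1 - ε / 2) * f * (Fintype.card V : ℝ) / 2 ≤ (matchNum G : ℝ)) ∧
        ((vcNum G : ℝ) ≤ (1 + ε / 2) * f * (Fintype.card V : ℝ) ∧
          (1 + ε / 2) * f * (Fintype.card V : ℝ) ≤ (1 + ε) * 2 * (vcNum G : ℝ))} : ℝ) := by
  classical
  set n : ℝ := (Fintype.card V : ℝ) with hndef
  have hn2 : (2 : ℝ) ≤ n := by rw [hndef]; exact_mod_cast hn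
  have hn0 : 0 < n := by linarith
  have : Nonempty V := Fintype.card_pos_iff.1 (by omega)
  have : Nonempty (EdgePerm G) := ⟨Fintype.equivFinOfCardEq (Fintype.card_coe _)⟩
  let A : V × EdgePerm G → Prop := fun x => matchedIn G (rank G x.2) x.1
  set P : ℝ := (Fintype.card (EdgePerm G) : ℝ) with hP
  have hP0 : 0 < P := by rw [hP]; exact_mod_cast Fintype.card_pos
  set a : ℝ := ((Finset.univ.filter A).card : ℝ) with ha
  have hN : (Fintype.card (V × EdgePerm G) : ℝ) = n * P := by
    rw [Fintype.card_prod]; push_cast; rfl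
  have hsum : a = ∑ σ : EdgePerm G, ((matchedSet G (rank G σ)).card : ℝ) := by
    rw [ha, card_matched_pairs]; push_cast; rfl
  have hlow : (vcNum G : ℝ) * P ≤ a := by
    have h := Finset.card_nsmul_le_sum Finset.univ
      (fun σ : EdgePerm G => ((matchedSet G (rank G σ)).card : ℝ)) (vcNum G)
      (fun σ _ => by exact_mod_cast vcNum_le_card_matched G (rank G σ))
    rw [hsum]
    simpa [mul_comm, hP] using h
  have hupp : a ≤ 2 * (matchNum G : ℝ) * P := by
    have h := Finset.sum_le_card_nsmul Finset.univ
      (fun σ : EdgePerm G => ((matchedSet G (rank G σ)).card : ℝ)) (2 * matchNum G)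
      (fun σ _ => by exact_mod_cast card_matched_le G (rank G σ) (rank_injOn G σ))
    rw [hsum]
    simpa [mul_comm, hP] using h
  set p : ℝ := a / (n * P) with hp
  have hpn : p * n = a / P := by rw [hp]; field_simp
  have hνq : (vcNum G : ℝ) ≤ p * n := by rw [hpn, le_div_iff₀ hP0]; exact hlow
  have hqμ : p * n ≤ 2 * (matchNum G : ℝ) := by rw [hpn, div_le_iff₀ hP0]; exact hupp
  have hμν : (matchNum G : ℝ) ≤ vcNum G := by exact_mod_cast matchNum_le_vcNum G
  have hk' : (0 : ℝ) < k := by exact_mod_cast hk0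
  have hL : 0 ≤ Real.log n := Real.log_nonneg (by linarith)
  have hmΔ : (G.edgeFinset.card : ℝ) ≤ vcNum G * G.maxDegree := by
    exact_mod_cast card_edges_le G
  have hm' : (1 : ℝ) ≤ G.edgeFinset.card := by exact_mod_cast hm
  have hΔ : (0 : ℝ) < G.maxDegree := by
    rcases (Nat.cast_nonneg (α := ℝ) G.maxDegree).lt_or_eq with h | h
    · exact h
    · rw [← h] at hmΔ; linarith
  have hkp : 1536 * Real.log n ≤ ε ^ 2 * (k * p) := by
    rw [div_le_iff₀ (by positivity)] at hk
    have h1 : k * (ε ^ 2 * (2 * (G.edgeFinset.card : ℝ) / n)) ≤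
        k * (ε ^ 2 * (2 * (p * n * G.maxDegree) / n)) := by
      have : (G.edgeFinset.card : ℝ) ≤ p * n * G.maxDegree :=
        hmΔ.trans (mul_le_mul_of_nonneg_right hνq hΔ.le)
      gcongr
    have h2 : k * (ε ^ 2 * (2 * (p * n * G.maxDegree) / n)) =
        2 * (ε ^ 2 * (k * p)) * G.maxDegree := by field_simp
    have h3 : (2 * (1536 * Real.log n)) * G.maxDegree ≤
        2 * (ε ^ 2 * (k * p)) * G.maxDegree := by linarith
    have := le_of_mul_le_mul_right h3 hΔ
    linarith
  have hkp0 : 0 ≤ k * p := by positivity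
  have hexp : Real.exp (-((ε / 8) ^ 2 * (k * p))) ≤ 1 / n ^ 4 := by
    have h4 : (1 : ℝ) / n ^ 4 = Real.exp (-(4 * Real.log n)) := by
      rw [Real.exp_neg, one_div]
      congr 1
      have := Real.exp_nat_mul (Real.log n) 4
      rw [Real.exp_log hn0] at this
      rw [← this]; norm_num
    rw [h4]
    apply Real.exp_le_exp.2
    nlinarith
  let X : (Fin k → V × EdgePerm G) → ℝ :=
    fun ω => ((Finset.univ.filter fun i => A (ω i)).card : ℝ)
  let B (t : ℝ) : Finset (Fin k → V × EdgePerm G) :=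
    Finset.univ.filter fun ω => t * (k * p) + 2 * t ^ 2 * (k * p) ≤ t * X ω
  have hBcard : ∀ t : ℝ, t ^ 2 = (ε / 8) ^ 2 → |t| ≤ 1 →
      ((B t).card : ℝ) ≤ 1 / n ^ 4 * (n * P) ^ k := by
    intro t ht ht1
    have := chernoff_count A k p t ht1 (by rw [hN, hp]; field_simp; exact ha) (B t)
      (fun ω hω => (Finset.mem_filter.1 hω).2)
    rw [hN, ht] at this
    exact this.trans (mul_le_mul_of_nonneg_right hexp (by positivity))
  have hB1 := hBcard (ε / 8) rfl (by rw [abs_le]; constructor <;> linarith)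
  have hB2 := hBcard (-(ε / 8)) (by ring) (by rw [abs_le]; constructor <;> linarith)
  have htot : (Fintype.card (Fin k → V × EdgePerm G) : ℝ) = (n * P) ^ k := by
    rw [Fintype.card_fun, Nat.cast_pow, hN, Fintype.card_fin]
  have hcompl : (Fintype.card (Fin k → V × EdgePerm G) : ℝ) ≤
      (((B (ε / 8) ∪ B (-(ε / 8)))ᶜ).card : ℝ) + (B (ε / 8)).card + (B (-(ε / 8))).card := by
    have h1 := Finset.card_compl_add_card (B (ε / 8) ∪ B (-(ε / 8)))
    have h2 := Finset.card_union_le (B (ε / 8)) (B (-(ε / 8)))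
    have : Fintype.card (Fin k → V × EdgePerm G) ≤
      ((B (ε / 8) ∪ B (-(ε / 8)))ᶜ).card + (B (ε / 8)).card + (B (-(ε / 8))).card := by omega
    exact_mod_cast this
  refine le_trans (b := (((B (ε / 8) ∪ B (-(ε / 8)))ᶜ).card : ℝ)) ?_ ?_
  · rw [htot] at hcompl ⊢
    have : (1 - 2 / n ^ 4) * (n * P) ^ k =
      (n * P) ^ k - 1 / n ^ 4 * (n * P) ^ k - 1 / n ^ 4 * (n * P) ^ k := by ring
    linarith
  · rw [← Set.ncard_coe_finset]
    refine Nat.cast_le.2 (Set.ncard_le_ncard ?_ (Set.toFinite _))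
    intro ω hω
    simp only [Finset.coe_compl, Finset.coe_union, Set.mem_compl_iff, Set.mem_union,
      Finset.mem_coe, B, Finset.mem_filter, Finset.mem_univ, true_and, not_or, not_le] at hω
    obtain ⟨hω1, hω2⟩ := hω
    have hX : (Nat.card {i : Fin k | matchedIn G (rank G (ω i).2) (ω i).1} : ℝ) = X ω := by
      simp only [X, A]
      rw [Nat.card_eq_fintype_card, Fintype.card_subtype]
      simp
    obtain ⟨hfl, hfu⟩ := rescale hε0 hk' hn0 hω1 hω2
    have := estimates hε0 hε1 (Nat.cast_nonneg _) hμν hνq hqμ hfl hfu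
    simp only [Set.mem_ofPred_eq]
    rw [hX]
    simpa only [mul_assoc] using this

end

end RGMM
end

section
/- Let G = (V, E) be a finite simple graph with m ≥ 1 edges, and let v ∈ V be a vertex of degree d + s, exactly s ≥ 1 of whose neighbors have degree 1 in G. Then the number of permutations π ∈ Π such that v is matched in GMM(G, π) to a neighbor of degree 1 is at least (s/(d + s)) · m!; in particular, if π is such that the minimum-rank edge incident to v joins v to a degree-1 neighbor, then that edge belongs to GMM(G, π). -/
/-!
If the minimum-rank edge at `v` is `s(v, w)` with `w` of degree `1`, no edge sharing an endpoint
with it has smaller rank, since the only edge at `w` is `s(v, w)` itself; hence the greedy process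
adds it (`inGMM_of_min`).

For the count, precomposing a permutation with the transposition of two edges at `v` shows that
each of the `d + s` edges at `v` is the minimum-rank one for equally many permutations
(`card_minAt_eq`). Every permutation has exactly one such minimum edge, so each of these classes has
`m! / (d + s)` elements, and the `s` classes belonging to degree-`1` neighbors together have
`s * m! / (d + s)` (`card_mul_card_equiv`).
-/


namespace RGMM

noncomputable section

variable {V : Type} [Fintype V] [DecidableEq V]

/-- The bijections `σ : α ≃ β` under which `g i` has the least value among all `g j`. -/
def minAt {ι α β : Type} [Fintype ι] [Fintype α] [DecidableEq α] [Fintype β] [LinearOrder β] (g : ι → α) (i : ι) : Finset (α ≃ β) :=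
  Finset.univ.filter (fun σ => ∀ j, σ (g i) ≤ σ (g j))

lemma card_minAt_le {ι α β : Type} [Fintype ι] [Fintype α] [DecidableEq α] [Fintype β]
    [LinearOrder β] (g : ι → α) (i k : ι) :
    (minAt (β := β) g i).card ≤ (minAt (β := β) g k).card := by
  refine Finset.card_le_card_of_injOn (fun σ => (Equiv.swap (g i) (g k)).trans σ) ?_ ?_
  · intro σ hσ
    simp only [minAt, Finset.coe_filter, Finset.mem_univ, true_and, Set.mem_ofPred_eq,
      Equiv.trans_apply, Equiv.swap_apply_right] at hσ ⊢
    intro j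
    rw [Equiv.swap_apply_def]
    split_ifs
    · exact hσ k
    · exact le_rfl
    · exact hσ j
  · intro σ _ τ _ h
    exact Equiv.ext fun x => by
      simpa using congrArg (fun f : α ≃ β => f (Equiv.swap (g i) (g k) x)) h

/-- By symmetry under transpositions, each `g i` is equally often the least. -/
lemma card_minAt_eq {ι α β : Type} [Fintype ι] [Fintype α] [DecidableEq α] [Fintype β]
    [LinearOrder β] (g : ι → α) (i k : ι) :
    (minAt (β := β) g i).card = (minAt (β := β) g k).card :=
  le_antisymm (card_minAt_le g i k) (card_minAt_le g k i)

lemma disjoint_minAt {ι α β : Type} [Fintype ι] [Fintype α] [DecidableEq α] [Fintype β]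
    [LinearOrder β] {g : ι → α} (hg : Function.Injective g) {i k : ι}
    (hik : i ≠ k) : Disjoint (minAt (β := β) g i) (minAt g k) := by
  rw [Finset.disjoint_left]
  intro σ h₁ h₂
  simp only [minAt, Finset.mem_filter, Finset.mem_univ, true_and] at h₁ h₂
  exact hik (hg (σ.injective (le_antisymm (h₁ k) (h₂ i))))

/-- The fraction of bijections `σ` for which the least of the `σ (g i)` is attained at an index in
`T` is `T.card / card ι`. -/
lemma card_mul_card_equiv {ι α β : Type} [Fintype ι] [DecidableEq ι] [Nonempty ι] [Fintype α]
    [DecidableEq α] [Fintype β] [LinearOrder β] {g : ι → α}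
    (hg : Function.Injective g) (T : Finset ι) :
    T.card * Fintype.card (α ≃ β) = Fintype.card ι * (T.biUnion (minAt (β := β) g)).card := by
  obtain ⟨i₀⟩ := ‹Nonempty ι›
  have key : ∀ S : Finset ι,
      (S.biUnion (minAt (β := β) g)).card = S.card * (minAt (β := β) g i₀).card := by
    intro S
    rw [Finset.card_biUnion fun i _ k _ h => disjoint_minAt hg h,
      Finset.sum_congr rfl fun i _ => card_minAt_eq g i i₀, Finset.sum_const, smul_eq_mul]
  have huniv : Finset.univ.biUnion (minAt (β := β) g) = Finset.univ := by
    ext σ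
    obtain ⟨i, -, hi⟩ := Finset.exists_min_image Finset.univ (fun i => σ (g i)) ⟨i₀, by simp⟩
    simp only [Finset.mem_biUnion, Finset.mem_univ, true_and, iff_true]
    exact ⟨i, by simpa [minAt] using hi⟩
  rw [← Finset.card_univ (α := α ≃ β), ← huniv, key, key, Finset.card_univ]
  ring

/-- A minimum-rank edge at `v` whose other end has degree `1` has no competing edge of smaller rank,
so the greedy matching contains it. -/
lemma inGMM_of_min (G : SimpleGraph V) [DecidableRel G.Adj] (π : Sym2 V → ℕ) {v w : V}
    (hvw : G.Adj v w) (hw : G.degree w = 1)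
    (hmin : ∀ u : V, G.Adj v u → π s(v, w) ≤ π s(v, u)) : inGMM G π s(v, w) := by
  rw [inGMM]
  refine ⟨hvw, ?_⟩
  rintro f hf ⟨x, hx, hxf⟩ hlt
  exfalso
  obtain ⟨u, rfl⟩ := Sym2.mem_iff_exists.mp hxf
  rw [SimpleGraph.mem_edgeSet] at hf
  rcases Sym2.mem_iff.mp hx with rfl | rfl
  · exact absurd (hmin u hf) (not_le.mpr hlt)
  · obtain ⟨y, -, hy⟩ := (SimpleGraph.degree_eq_one_iff_existsUnique_adj).mp hw
    rw [hy u hf, ← hy v hvw.symm, Sym2.eq_swap] at hlt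
    exact lt_irrefl _ hlt

/-- **Statement 15.** Let `v` be a vertex of degree `d + s`, exactly `s ≥ 1` of whose
neighbors have degree `1`.  Then the number of permutations `π ∈ Π` such that `v` is
matched in `GMM(G, π)` to a degree-`1` neighbor is at least `(s/(d+s)) · m!`; in
particular, if the minimum-rank edge incident to `v` joins `v` to a degree-`1` neighbor,
then that edge belongs to `GMM(G, π)`. -/
theorem statement_15 {V : Type} [Fintype V] [DecidableEq V] (G : SimpleGraph V)
    [DecidableRel G.Adj] (hm : 1 ≤ G.edgeFinset.card) (v : V) (d s : ℕ) (hs : 1 ≤ s)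
    (hdeg : G.degree v = d + s)
    (hcount : ((G.neighborFinset v).filter (fun w => G.degree w = 1)).card = s) :
    ((s : ℝ) / ((d : ℝ) + (s : ℝ))) * (Nat.factorial G.edgeFinset.card : ℝ) ≤
      (Nat.card {σ : EdgePerm G | ∃ w : V, G.Adj v w ∧ G.degree w = 1 ∧
          inGMM G (rank G σ) s(v, w)} : ℝ) ∧
    ∀ σ : EdgePerm G, ∀ w : V, G.Adj v w → G.degree w = 1 →
      (∀ u : V, G.Adj v u → rank G σ s(v, w) ≤ rank G σ s(v, u)) →
      inGMM G (rank G σ) s(v, w) := by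
  have hpart : ∀ σ : EdgePerm G, ∀ w : V, G.Adj v w → G.degree w = 1 →
      (∀ u : V, G.Adj v u → rank G σ s(v, w) ≤ rank G σ s(v, u)) →
      inGMM G (rank G σ) s(v, w) :=
    fun σ w hvw hw hmin => inGMM_of_min G (rank G σ) hvw hw hmin
  refine ⟨?_, hpart⟩
  -- The edges at `v`, indexed by the neighbors of `v`.
  let g : {w // w ∈ G.neighborFinset v} → {e // e ∈ G.edgeFinset} := fun w =>
    ⟨s(v, w), by simpa using (G.mem_neighborFinset v w).mp w.2⟩
  have hg : Function.Injective g := by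
    intro a b h
    exact Subtype.ext (Sym2.congr_right.mp (congrArg Subtype.val h))
  have hcardι : Fintype.card {w // w ∈ G.neighborFinset v} = d + s := by
    rw [Fintype.card_coe, SimpleGraph.card_neighborFinset_eq_degree, hdeg]
  have : Nonempty {w // w ∈ G.neighborFinset v} := Fintype.card_pos_iff.mp (by omega)
  let T : Finset {w // w ∈ G.neighborFinset v} := Finset.univ.filter (fun w => G.degree w.1 = 1)
  have hT : T.card = s := by
    rw [← hcount, ← Finset.card_map (Function.Embedding.subtype _)]
    congr 1
    ext w
    simp only [T, Finset.mem_map, Finset.mem_filter, Finset.mem_univ, true_and]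
    exact ⟨fun ⟨a, ha, e⟩ => e ▸ ⟨a.2, ha⟩, fun h => ⟨⟨w, h.1⟩, h.2, rfl⟩⟩
  have hfact : Fintype.card (EdgePerm G) = Nat.factorial G.edgeFinset.card := by
    rw [Fintype.card_equiv (Finset.equivFin _), Fintype.card_coe]
  have hmain := card_mul_card_equiv (β := Fin G.edgeFinset.card) hg T
  rw [hfact, hT, hcardι] at hmain
  have hle : (T.biUnion (minAt (β := Fin G.edgeFinset.card) g)).card ≤
      Nat.card {σ : EdgePerm G | ∃ w : V, G.Adj v w ∧ G.degree w = 1 ∧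
          inGMM G (rank G σ) s(v, w)} := by
    rw [Nat.card_coe_set_eq, ← Set.ncard_coe_finset]
    refine Set.ncard_le_ncard ?_ (Set.toFinite _)
    intro σ hσ
    simp only [Finset.coe_biUnion, Set.mem_iUnion, Finset.mem_coe] at hσ
    obtain ⟨w, hwT, hσw⟩ := hσ
    have hvw : G.Adj v w := (G.mem_neighborFinset v w).mp w.2
    have hw : G.degree w.1 = 1 := (Finset.mem_filter.mp hwT).2
    refine ⟨w, hvw, hw, hpart σ w hvw hw fun u hu => ?_⟩
    have h := (Finset.mem_filter.mp hσw).2 ⟨u, by simpa using hu⟩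
    have h₁ : s(v, w.1) ∈ G.edgeFinset := by simpa using hvw
    have h₂ : s(v, u) ∈ G.edgeFinset := by simpa using hu
    rw [rank, rank, dif_pos h₁, dif_pos h₂]
    exact Nat.succ_le_succ h
  have hpos : (0 : ℝ) < (d : ℝ) + (s : ℝ) := by exact_mod_cast (by omega : 0 < d + s)
  rw [div_mul_eq_mul_div, div_le_iff₀ hpos, mul_comm _ ((d : ℝ) + (s : ℝ))]
  exact_mod_cast hmain.le.trans (Nat.mul_le_mul_left _ hle)

end

end RGMM
end
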